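/- Let n ≥ 2 be an integer, F and G division rings, and φ : F → Mₙ(G) a 1-tight ring embedding. Then there exist division rings F′ and G′, ring embeddings ι_F : F → F′, ι_G : G → G′, and a ring embedding φ′ : F′ → Mₙ(G′) with φ′(ι_F(f)) equal to φ(f) with ι_G applied entrywise for all f ∈ F, such that φ′ is both 1-tight and 2-tight. -/

import Mathlib

/-- `φ : F → Mₙ(α)` is `a`-tight: every possible upper-right `a × (n+1-a)` block
(rows `1,…,a`, columns `a,…,n`, one-indexed) is realized by some element of `F`. -/
def ATight {n : ℕ} {F α : Type*} (φ : F → Matrix (Fin n) (Fin n) α) (a : ℕ) : Prop :=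
  ∀ g : Matrix (Fin n) (Fin n) α, ∃ x : F, ∀ i j : Fin n,
    (i : ℕ) < a → a ≤ (j : ℕ) + 1 → φ x i j = g i j

/-- An extension of the embedding `φ : F → Mₙ(G)` along division ring embeddings
`F → F′` and `G → G′` to an embedding `φ′ : F′ → Mₙ(G′)`. -/
structure EmbExtension (n : ℕ) (F G : Type) [DivisionRing F] [DivisionRing G]
    (φ : F →+* Matrix (Fin n) (Fin n) G) : Type 1 where
  F' : Type
  G' : Type
  [instF' : DivisionRing F']
  [instG' : DivisionRing G']
  ιF : F →+* F'
  ιG : G →+* G'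
  injF : Function.Injective ιF
  injG : Function.Injective ιG
  φ' : F' →+* Matrix (Fin n) (Fin n) G'
  injφ' : Function.Injective φ'
  compat : ∀ x : F, φ' (ιF x) = (φ x).map ⇑ιG

attribute [instance] EmbExtension.instF' EmbExtension.instG'


namespace FT
open Matrix

def Triv (R : Type) [Ring R] : Prop :=
  ∀ (m n p : Type) [Fintype m] [Fintype n] [Fintype p] (X : Matrix m n R) (Y : Matrix n p R),
    X * Y = 0 → ∃ (n1 n2 : Type) (_ : Fintype n1) (_ : Fintype n2) (K : Matrix n n1 R)
      (Y1 : Matrix n1 p R) (X2 : Matrix m n2 R) (L : Matrix n2 n R),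
      Fintype.card n1 + Fintype.card n2 = Fintype.card n ∧ Y = K * Y1 ∧ X = X2 * L

def Full {R : Type} [Ring R] {κ : Type} [Fintype κ] (A : Matrix κ κ R) : Prop :=
  ∀ (ρ : Type) [Fintype ρ] (X : Matrix κ ρ R) (Y : Matrix ρ κ R), A = X * Y →
    Fintype.card κ ≤ Fintype.card ρ

def Cert {R : Type} [Ring R] {κ τ : Type} [Fintype κ] (A : Matrix κ κ R)
    (b : Matrix κ Unit R) (F : Matrix τ κ R) : Prop :=
  ∃ (ρ : Type) (_ : Fintype ρ) (P : Matrix κ ρ R) (U : Matrix ρ κ R) (β : Matrix ρ Unit R)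
    (H : Matrix τ ρ R), Fintype.card ρ ≤ Fintype.card κ ∧ A = P * U ∧ b = P * β ∧ F = H * U ∧
      H * β = 0

section
variable {R : Type} [Ring R]

theorem Full.reindex {κ κ' : Type} [Fintype κ] [Fintype κ'] {A : Matrix κ κ R} (hA : Full A)
    (e : κ' ≃ κ) : Full (A.submatrix e e) := by
  intro ρ _ X Y h
  rw [Fintype.card_congr e]
  refine hA ρ (X.submatrix e.symm id) (Y.submatrix id e.symm) ?_
  ext i j
  have := congrFun (congrFun h (e.symm i)) (e.symm j)
  simpa [Matrix.mul_apply] using this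

theorem Full.of_reindex {κ κ' : Type} [Fintype κ] [Fintype κ'] {A : Matrix κ κ R}
    (e : κ' ≃ κ) (hA : Full (A.submatrix e e)) : Full A := by
  have := hA.reindex e.symm
  simpa using this

theorem Full.map_of {S : Type} [Ring S] {κ : Type} [Fintype κ] {A : Matrix κ κ R}
    (f : R →+* S) (h : Full (A.map f)) : Full A := by
  intro ρ _ X Y e
  refine h ρ (X.map f) (Y.map f) ?_
  rw [e, Matrix.map_mul]

theorem full_one_unit (hR : Nontrivial R) : Full (1 : Matrix Unit Unit R) := by
  intro ρ _ X Y h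
  by_contra hc
  have h0 : Fintype.card ρ = 0 := by simpa using hc
  have : IsEmpty ρ := Fintype.card_eq_zero_iff.1 h0
  have := congrFun (congrFun h ()) ()
  simp [Matrix.mul_apply] at this

theorem Full.blocks (hT : Triv R) {κ μ : Type} [Fintype κ] [Fintype μ] {A : Matrix κ κ R}
    {B : Matrix μ μ R} (hA : Full A) (hB : Full B) (C : Matrix κ μ R) :
    Full (fromBlocks A C 0 B) := by
  intro ρ _ X Y h
  rw [← fromRows_toRows X, ← fromCols_toCols Y, fromRows_mul_fromCols, fromBlocks_inj] at h
  obtain ⟨h1, h2, h3, h4⟩ := h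
  obtain ⟨n1, n2, _, _, K, Y1, X2, L, hc, hY, hX⟩ := hT _ _ _ _ _ h3.symm
  have e1 := hA n1 (X.toRows₁ * K) Y1 (by rw [h1, Matrix.mul_assoc, ← hY])
  have e2 := hB n2 X2 (L * Y.toCols₂) (by rw [h4, ← Matrix.mul_assoc, ← hX])
  rw [Fintype.card_sum]; omega

theorem Full.cancel_left (hT : Triv R) {κ ρ p: Type} [Fintype κ] [Fintype ρ] [Fintype p]
    {A : Matrix κ κ R} (hA : Full A) (P : Matrix κ ρ R) (U : Matrix ρ κ R) (h : A = P * U)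
    (hc : Fintype.card ρ ≤ Fintype.card κ) (Y : Matrix ρ p R) (hY : P * Y = 0) : Y = 0 := by
  obtain ⟨n1, n2, _, _, K, Y1, X2, L, hc', hY, hX⟩ := hT _ _ _ _ _ hY
  have := hA n2 X2 (L * U) (by rw [h, hX, Matrix.mul_assoc])
  have h0 : Fintype.card n1 = 0 := by omega
  have : IsEmpty n1 := Fintype.card_eq_zero_iff.1 h0
  rw [hY]; ext; simp [Matrix.mul_apply]

theorem Full.cancel_right (hT : Triv R) {κ ρ p: Type} [Fintype κ] [Fintype ρ] [Fintype p]
    {A : Matrix κ κ R} (hA : Full A) (P : Matrix κ ρ R) (U : Matrix ρ κ R) (h : A = P * U)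
    (hc : Fintype.card ρ ≤ Fintype.card κ) (Y : Matrix p ρ R) (hY : Y * U = 0) : Y = 0 := by
  obtain ⟨n1, n2, _, _, K, Y1, X2, L, hc', hY, hX⟩ := hT _ _ _ _ _ hY
  have := hA n1 (P * K) Y1 (by rw [h, hY, Matrix.mul_assoc])
  have h0 : Fintype.card n2 = 0 := by omega
  have : IsEmpty n2 := Fintype.card_eq_zero_iff.1 h0
  rw [hX]; ext; simp [Matrix.mul_apply]

theorem Full.factor_left {κ : Type} [Fintype κ]
    {A P U : Matrix κ κ R} (hA : Full A) (h : A = P * U) : Full P := by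
  intro ρ _ X Y e
  exact hA ρ X (Y * U) (by rw [h, e, Matrix.mul_assoc])

theorem Cert.mul {κ τ σ : Type} [Fintype κ] [Fintype τ] {A : Matrix κ κ R}
    {b : Matrix κ Unit R} {F : Matrix τ κ R} (h : Cert A b F) (Z : Matrix σ τ R) :
    Cert A b (Z * F) := by
  obtain ⟨ρ, _, P, U, β, H, h1, h2, h3, h4, h5⟩ := h
  exact ⟨ρ, _, P, U, β, Z * H, h1, h2, h3, by rw [h4, Matrix.mul_assoc],
    by rw [Matrix.mul_assoc, h5, Matrix.mul_zero]⟩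

theorem Cert.zero {κ τ : Type} [Fintype κ] [DecidableEq κ] (A : Matrix κ κ R)
    (b : Matrix κ Unit R) : Cert A b (0 : Matrix τ κ R) :=
  ⟨κ, _, 1, A, b, 0, le_rfl, by simp, by simp, by simp, by simp⟩

theorem Cert.submatrix {κ κ' τ τ' : Type} [Fintype κ] [Fintype κ'] {A : Matrix κ κ R}
    {b : Matrix κ Unit R} {F : Matrix τ κ R} (h : Cert A b F) (e : κ' ≃ κ) (s : τ' → τ) :
    Cert (A.submatrix e e) (b.submatrix e id) (F.submatrix s e) := by
  obtain ⟨ρ, _, P, U, β, H, h1, h2, h3, h4, h5⟩ := h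
  refine ⟨ρ, inferInstance, P.submatrix e id, U.submatrix id e, β, H.submatrix s id, ?_, ?_, ?_, ?_, ?_⟩
  · rwa [Fintype.card_congr e]
  · rw [h2]; ext; simp [Matrix.mul_apply]
  · rw [h3]; ext; simp [Matrix.mul_apply]
  · rw [h4]; ext; simp [Matrix.mul_apply]
  · ext i j; have := congrFun (congrFun h5 (s i)) j; simpa [Matrix.mul_apply] using this

theorem Cert.join (hT : Triv R) {κ τ τ' : Type} [Fintype κ] {A : Matrix κ κ R}
    (hA : Full A) {b : Matrix κ Unit R} {F : Matrix τ κ R} {F' : Matrix τ' κ R}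
    (h : Cert A b F) (h' : Cert A b F') : Cert A b (fromRows F F') := by
  obtain ⟨ρ, _, P, U, β, H, h1, h2, h3, h4, h5⟩ := h
  obtain ⟨ρ', _, P', U', β', H', h1', h2', h3', h4', h5'⟩ := h'
  have key : fromCols P (-P') * fromRows (fromCols U β) (fromCols U' β') = 0 := by
    rw [fromCols_mul_fromRows, mul_fromCols, mul_fromCols, Matrix.neg_mul, Matrix.neg_mul,
      ← h2, ← h3, ← h2', ← h3']
    ext i (j | j) <;> simp
  obtain ⟨n1, n2, _, _, K, Y1, X2, L, hc, hY, hX⟩ := hT _ _ _ _ _ key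
  rw [← fromRows_toRows K, ← fromCols_toCols Y1, fromRows_mul] at hY
  rw [mul_fromCols, mul_fromCols, fromRows_ext_iff, fromCols_ext_iff, fromCols_ext_iff] at hY
  obtain ⟨⟨e1, e2⟩, e3, e4⟩ := hY
  rw [← fromCols_toCols L, mul_fromCols, fromCols_ext_iff] at hX
  have := hA n2 X2 (L.toCols₁ * U) (by rw [h2, hX.1, Matrix.mul_assoc])
  rw [Fintype.card_sum] at hc
  refine ⟨n1, _, P * K.toRows₁, Y1.toCols₁, Y1.toCols₂,
    fromRows (H * K.toRows₁) (H' * K.toRows₂), by omega, ?_, ?_, ?_, ?_⟩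
  · rw [Matrix.mul_assoc, ← e1, h2]
  · rw [Matrix.mul_assoc, ← e2, h3]
  · rw [fromRows_mul, Matrix.mul_assoc, Matrix.mul_assoc, ← e1, ← e3, h4, h4']
  · rw [fromRows_mul, Matrix.mul_assoc, Matrix.mul_assoc, ← e2, ← e4, h5, h5']
    ext (i | i) j <;> simp

theorem Cert.full_cancel (hT : Triv R) {κ σ : Type} [Fintype κ] [Fintype σ] {A : Matrix κ κ R}
    {b : Matrix κ Unit R} {C : Matrix σ σ R} (hC : Full C) {F : Matrix σ κ R}
    (h : Cert A b (C * F)) : Cert A b F := by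
  obtain ⟨ρ, _, P, U, β, H, h1, h2, h3, h4, h5⟩ := h
  have key : fromCols C (-H) * fromRows (fromCols F 0) (fromCols U β) = 0 := by
    rw [fromCols_mul_fromRows, mul_fromCols, mul_fromCols, Matrix.neg_mul, Matrix.neg_mul,
      h4, h5]
    ext i (j | j) <;> simp
  obtain ⟨n1, n2, _, _, K, Y1, X2, L, hc, hY, hX⟩ := hT _ _ _ _ _ key
  rw [← fromRows_toRows K, ← fromCols_toCols Y1, fromRows_mul] at hY
  rw [mul_fromCols, mul_fromCols, fromRows_ext_iff, fromCols_ext_iff, fromCols_ext_iff] at hY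
  obtain ⟨⟨e1, e2⟩, e3, e4⟩ := hY
  rw [← fromCols_toCols L, mul_fromCols, fromCols_ext_iff] at hX
  have := hC n2 X2 (L.toCols₁) hX.1
  rw [Fintype.card_sum] at hc
  refine ⟨n1, _, P * K.toRows₂, Y1.toCols₁, Y1.toCols₂, K.toRows₁, by omega, ?_, ?_, e1, e2.symm⟩
  · rw [Matrix.mul_assoc, ← e3, h2]
  · rw [Matrix.mul_assoc, ← e4, h3]

theorem Cert.ext_block {κ μ τ : Type} [Fintype κ] [Fintype μ] [DecidableEq μ] {A : Matrix κ κ R}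
    {b : Matrix κ Unit R} {F : Matrix τ κ R} (h : Cert A b F) (A2 : Matrix μ μ R)
    (b2 : Matrix μ Unit R) :
    Cert (fromBlocks A 0 0 A2) (fromRows b b2) (fromCols F 0) := by
  obtain ⟨ρ, _, P, U, β, H, h1, h2, h3, h4, h5⟩ := h
  refine ⟨ρ ⊕ μ, inferInstance, fromBlocks P 0 0 1, fromBlocks U 0 0 A2, fromRows β b2,
    fromCols H 0, by simpa using h1, ?_, ?_, ?_, ?_⟩
  · simp [fromBlocks_multiply, h2]
  · simp [fromBlocks_mul_fromRows, h3]
  · simp [fromCols_mul_fromBlocks, h4]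
  · simp [fromCols_mul_fromRows, h5]

theorem Cert.surj {κ σ : Type} [Fintype κ] [Fintype σ] [DecidableEq κ] [DecidableEq σ]
    (A : Matrix κ κ R) (b : Matrix κ Unit R) (C : Matrix σ σ R) (F : Matrix σ κ R) :
    Cert (fromBlocks A 0 0 (fromBlocks C (-F) 0 A)) (fromRows b (fromRows 0 b))
      (fromCols (-F) (fromCols C 0)) := by
  refine ⟨κ ⊕ (σ ⊕ κ), inferInstance, fromBlocks A (fromCols 0 1) 0 1,
    fromBlocks 1 (fromCols 0 (-1)) 0 (fromBlocks C (-F) 0 A), fromRows 0 (fromRows 0 b),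
    fromCols (-F) (fromCols 1 0), le_rfl, ?_, ?_, ?_, ?_⟩
  · simp [fromBlocks_multiply, fromCols_mul_fromBlocks, mul_fromCols]
    ext i (j | j) <;> simp
  · simp [fromBlocks_mul_fromRows, fromCols_mul_fromRows]
  · simp [fromCols_mul_fromBlocks, mul_fromCols]
    ext i (j | j | j) <;> simp
  · simp [fromCols_mul_fromRows]

theorem Cert.single_false (hT : Triv R) {κ : Type} [Fintype κ] [DecidableEq κ]
    (hR : Nontrivial R) {A : Matrix κ κ R}
    (hA : Full A) {b : Matrix κ Unit R} (j : κ) (hj : ∀ i, A j i = if i = j then 1 else 0)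
    (hb : b j () = 1) (F : Matrix Unit κ R) (hF : ∀ i, F () i = if i = j then 1 else 0)
    (h : Cert A b F) : False := by
  obtain ⟨ρ, _, P, U, β, H, h1, h2, h3, h4, h5⟩ := h
  have key : (H - P.submatrix (fun _ : Unit => j) id) * U = 0 := by
    rw [Matrix.sub_mul, ← h4]
    have : P.submatrix (fun _ : Unit => j) id * U = F := by
      ext x i
      rw [hF, ← hj, h2]; simp [Matrix.mul_apply]
    rw [this, sub_self]
  have := hA.cancel_right hT P U h2 h1 _ key
  rw [sub_eq_zero] at this
  have e : (H * β) () () = 1 := by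
    rw [this, ← hb, h3]; simp [Matrix.mul_apply]
  rw [h5] at e; simp at e

end
end FT


namespace FT
open Matrix
open scoped Classical

section
variable {R : Type} [Ring R]

theorem Cert.of_rows (hT : Triv R) {κ : Type} [Fintype κ] {A : Matrix κ κ R}
    (hA : Full A) {b : Matrix κ Unit R} {τ : Type} [Finite τ] (F : Matrix τ κ R)
    (h : ∀ t, Cert A b (F.submatrix (fun _ : Unit => t) id)) : Cert A b F := by
  revert F
  refine Finite.induction_empty_option (P := fun τ => ∀ F : Matrix τ κ R,
    (∀ t, Cert A b (F.submatrix (fun _ : Unit => t) id)) → Cert A b F) ?_ ?_ ?_ τ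
  · intro α β e ih F h
    have := ih (F.submatrix e id) (fun t => h (e t))
    have := this.submatrix (Equiv.refl _) e.symm
    simpa using this
  · intro F _
    have : F = 0 := by ext i; exact i.elim
    rw [this]; exact Cert.zero _ _
  · intro α _ ih F h
    have h1 := ih (F.submatrix some id) (fun t => h (some t))
    have h2 := (Cert.join hT hA h1 (h none)).submatrix (Equiv.refl _)
      (fun t : Option α => match t with | none => Sum.inr () | some a => Sum.inl a)
    have e : F = (fromRows (F.submatrix some id) (F.submatrix (fun _ : Unit => none) id)).submatrix
      (fun t : Option α => match t with | none => Sum.inr () | some a => Sum.inl a)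
      (Equiv.refl _) := by
      ext i j
      cases i <;> rfl
    rw [e]
    exact h2

variable (R) in
structure Idx where
  tag : ℕ
  k : ℕ
  A : Matrix (Fin k) (Fin k) R
  b : Matrix (Fin k) Unit R
  full : Full A

variable (R) in
abbrev GI := Σ i : Idx R, Fin i.k

noncomputable def gA : Matrix (GI R) (GI R) R := Matrix.blockDiagonal' (fun i : Idx R => i.A)

def gb : Matrix (GI R) Unit R := fun p u => p.1.b p.2 u

abbrev KT (T : Finset (Idx R)) := {p : GI R // p.1 ∈ T}

noncomputable instance (T : Finset (Idx R)) : Fintype (KT T) := by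
  have : Finite (KT T) := by
    refine Finite.of_injective (β := Σ i : T, Fin i.1.k) (fun p => ⟨⟨p.1.1, p.2⟩, p.1.2⟩) ?_
    rintro ⟨⟨i, a⟩, hi⟩ ⟨⟨j, b⟩, hj⟩ h
    simp only [Sigma.mk.injEq, Subtype.mk.injEq] at h
    obtain ⟨rfl, h⟩ := h
    simp at h
    simp [h]
  exact Fintype.ofFinite _

noncomputable def AT (T : Finset (Idx R)) : Matrix (KT T) (KT T) R :=
  gA.submatrix Subtype.val Subtype.val
noncomputable def bT (T : Finset (Idx R)) : Matrix (KT T) Unit R :=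
  gb.submatrix Subtype.val id

noncomputable def uEquiv (T S : Finset (Idx R)) (h : Disjoint T S) : KT (T ∪ S) ≃ KT T ⊕ KT S where
  toFun p := if hp : p.1.1 ∈ T then Sum.inl ⟨p.1, hp⟩ else
    Sum.inr ⟨p.1, (Finset.mem_union.1 p.2).resolve_left hp⟩
  invFun := Sum.elim (fun p => ⟨p.1, Finset.mem_union_left _ p.2⟩)
    (fun p => ⟨p.1, Finset.mem_union_right _ p.2⟩)
  left_inv p := by
    by_cases hp : p.1.1 ∈ T <;> simp [hp]
  right_inv p := by
    rcases p with p | p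
    · simp [p.2]
    · have := Finset.disjoint_right.1 h p.2
      simp [this]

theorem gA_ne {p q : GI R} (h : p.1 ≠ q.1) : gA p q = 0 := by
  obtain ⟨i, a⟩ := p
  obtain ⟨j, b⟩ := q
  exact blockDiagonal'_apply_ne _ _ _ h

theorem AT_union (T S : Finset (Idx R)) (h : Disjoint T S) :
    (AT (T ∪ S)).submatrix (uEquiv T S h).symm (uEquiv T S h).symm =
      fromBlocks (AT T) 0 0 (AT S) := by
  ext (p | p) (q | q)
  · rfl
  · exact gA_ne (fun e => Finset.disjoint_left.1 h p.2 (e ▸ q.2))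
  · exact gA_ne (fun e => Finset.disjoint_left.1 h q.2 (e ▸ p.2))
  · rfl

theorem bT_union (T S : Finset (Idx R)) (h : Disjoint T S) :
    (bT (T ∪ S)).submatrix (uEquiv T S h).symm id = fromRows (bT T) (bT S) := by
  ext (p | p) u
  · rfl
  · rfl

def sEquiv (i : Idx R) : Fin i.k ≃ KT {i} where
  toFun a := ⟨⟨i, a⟩, by simp⟩
  invFun p := Fin.cast (by rw [Finset.mem_singleton.1 p.2]) p.1.2
  left_inv a := rfl
  right_inv p := by
    obtain ⟨⟨j, a⟩, hp⟩ := p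
    obtain rfl := Finset.mem_singleton.1 hp
    rfl

theorem AT_single (i : Idx R) : (AT {i}).submatrix (sEquiv i) (sEquiv i) = i.A := by
  ext a b
  exact blockDiagonal'_apply_eq (fun i : Idx R => i.A) i a b

theorem AT_full (hT : Triv R) (T : Finset (Idx R)) : Full (AT T) := by
  induction T using Finset.induction_on with
  | empty =>
    intro ρ _ X Y h
    have : Fintype.card (KT (∅ : Finset (Idx R))) = 0 :=
      Fintype.card_eq_zero_iff.2 ⟨fun p => absurd p.2 (Finset.notMem_empty _)⟩
    omega
  | insert i T hi ih =>
    rw [Finset.insert_eq]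
    have hd : Disjoint {i} T := by simpa using hi
    apply Full.of_reindex (uEquiv {i} T hd).symm
    rw [AT_union]
    refine Full.blocks hT ?_ ih 0
    apply Full.of_reindex (sEquiv i)
    rw [AT_single]; exact i.full

def rowT {τ : Type} (T : Finset (Idx R)) (y : τ → GI R →₀ R) : Matrix τ (KT T) R :=
  fun t p => y t p.1

def CertT {τ : Type} (T : Finset (Idx R)) (y : τ → GI R →₀ R) : Prop :=
  (∀ t p, p.1 ∉ T → y t p = 0) ∧ Cert (AT T) (bT T) (rowT T y)

theorem CertT.union {τ : Type} {T S : Finset (Idx R)} {y : τ → GI R →₀ R} (h : CertT T y)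
    (hd : Disjoint T S) : CertT (T ∪ S) y := by
  refine ⟨fun t p hp => h.1 t p (fun hh => hp (Finset.mem_union_left _ hh)), ?_⟩
  have := (h.2.ext_block (AT S) (bT S)).submatrix (uEquiv T S hd) id
  rw [← AT_union T S hd, ← bT_union T S hd] at this
  convert this using 1
  · ext; simp
  · ext; simp
  · ext t p
    obtain ⟨p, rfl⟩ := (uEquiv T S hd).symm.surjective p
    rcases p with p | p
    · simp; rfl
    · simp
      exact h.1 _ _ (Finset.disjoint_right.1 hd p.2)

theorem CertT.mono {τ : Type} {T S : Finset (Idx R)} {y : τ → GI R →₀ R} (h : CertT T y)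
    (hd : T ⊆ S) : CertT S y := by
  have := h.union (S := S \ T) Finset.disjoint_sdiff
  rwa [Finset.union_sdiff_of_subset hd] at this

theorem CertT.comb {τ σ : Type} [Fintype τ] {T : Finset (Idx R)} {y : τ → GI R →₀ R}
    (h : CertT T y) (Z : Matrix σ τ R) : CertT T (fun s => ∑ t, Z s t • y t) := by
  refine ⟨fun t p hp => ?_, ?_⟩
  · simp [Finsupp.finsetSum_apply, h.1 _ _ hp]
  · convert h.2.mul Z using 1
    ext s p
    simp [rowT, Matrix.mul_apply, Finsupp.finsetSum_apply]

theorem CertT.of_rows (hT : Triv R) {τ : Type} [Fintype τ] {y : τ → GI R →₀ R}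
    (h : ∀ t, ∃ T, CertT T (fun _ : Unit => y t)) : ∃ T, CertT T y := by
  choose T h using h
  have h' : ∀ t, CertT (Finset.univ.sup T) (fun _ : Unit => y t) := fun t =>
    (h t).mono (Finset.le_sup (f := T) (Finset.mem_univ t))
  refine ⟨_, fun t p hp => (h' t).1 () p hp, ?_⟩
  exact Cert.of_rows hT (AT_full hT _) _ (fun t => (h' t).2)

def NN (hT : Triv R) : Submodule R (GI R →₀ R) where
  carrier := {y | ∃ T, CertT T (fun _ : Unit => y)}
  zero_mem' := ⟨∅, by simp, by
    exact Cert.zero (τ := Unit) (AT ∅) (bT ∅)⟩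
  add_mem' := by
    intro y y' h h'
    obtain ⟨T, hh⟩ := CertT.of_rows hT (y := fun b : Bool => if b then y else y')
      (by intro b; cases b <;> simpa)
    refine ⟨T, ?_⟩
    convert hh.comb (σ := Unit) (fun _ _ => 1) using 1
    ext; simp
  smul_mem' := by
    rintro r y ⟨T, h⟩
    refine ⟨T, ?_⟩
    convert h.comb (σ := Unit) (fun _ _ => r) using 1
    ext; simp

theorem NN_inj (hT : Triv R) {σ : Type} [Fintype σ] {C : Matrix σ σ R} (hC : Full C)
    (y : σ → GI R →₀ R) (h : ∀ i, ∑ j, C i j • y j ∈ NN hT) (j : σ) : y j ∈ NN hT := by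
  obtain ⟨T, hh⟩ := CertT.of_rows hT (y := fun i => ∑ j, C i j • y j) h
  -- enlarge T to contain supports
  set S : Finset (Idx R) := Finset.univ.biUnion (fun j => (y j).support.image Sigma.fst)
  have hs : ∀ t p, p.1 ∉ T ∪ S → y t p = 0 := by
    intro t p hp
    by_contra hne
    apply hp
    apply Finset.mem_union_right
    rw [Finset.mem_biUnion]
    exact ⟨t, Finset.mem_univ _, Finset.mem_image.2 ⟨p, by simpa using hne, rfl⟩⟩
  have h2 := (hh.mono (Finset.subset_union_left (s₂ := S))).2
  have h3 : Cert (AT (T ∪ S)) (bT (T ∪ S)) (C * rowT (T ∪ S) y) := by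
    convert h2 using 1
    ext s p
    simp [rowT, Matrix.mul_apply, Finsupp.finsetSum_apply]
  have h4 := Cert.full_cancel hT hC h3
  refine ⟨T ∪ S, fun t p hp => hs j p hp, ?_⟩
  exact h4.submatrix (Equiv.refl _) (fun _ => j)

theorem NN_surj (hT : Triv R) {σ : Type} [Fintype σ] {C : Matrix σ σ R} (hC : Full C)
    (c : σ → GI R →₀ R) : ∃ y : σ → GI R →₀ R, ∀ i, (∑ j, C i j • y j) - c i ∈ NN hT := by
  set T : Finset (Idx R) := Finset.univ.biUnion (fun j => (c j).support.image Sigma.fst)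
  have hs : ∀ t p, p.1 ∉ T → c t p = 0 := by
    intro t p hp
    by_contra hne
    apply hp
    rw [Finset.mem_biUnion]
    exact ⟨t, Finset.mem_univ _, Finset.mem_image.2 ⟨p, by simpa using hne, rfl⟩⟩
  obtain ⟨tag, htag⟩ := Infinite.exists_notMem_finset (T.image Idx.tag)
  set F := rowT T c
  set e := Fintype.equivFin (σ ⊕ KT T)
  have hfull : Full (fromBlocks C (-F) 0 (AT T)) := Full.blocks hT hC (AT_full hT T) _
  let i1 : Idx R := ⟨tag, _, (fromBlocks C (-F) 0 (AT T)).submatrix e.symm e.symm,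
    (fromRows 0 (bT T)).submatrix e.symm id, hfull.reindex _⟩
  have hi : i1 ∉ T := fun h => htag (Finset.mem_image_of_mem _ h)
  have hd : Disjoint T {i1} := by simpa using hi
  refine ⟨fun j => Finsupp.single ⟨i1, e (Sum.inl j)⟩ 1, fun i => ⟨T ∪ {i1}, ?_, ?_⟩⟩
  · intro t p hp
    have h1 : p.1 ∉ T := fun h => hp (Finset.mem_union_left _ h)
    have h2 : p.1 ≠ i1 := fun h => hp (Finset.mem_union_right _ (by simp [h]))
    have : ∀ a, (⟨i1, a⟩ : GI R) ≠ p := fun a h => h2 (by rw [← h])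
    simp [Finsupp.finsetSum_apply, hs _ _ h1, Finsupp.single_apply, this]
  · set E : KT (T ∪ {i1}) ≃ KT T ⊕ (σ ⊕ KT T) := (uEquiv T {i1} hd).trans
      ((Equiv.refl _).sumCongr ((sEquiv i1).symm.trans e.symm)) with hE
    have key := (Cert.surj (AT T) (bT T) C F).submatrix E (fun _ : Unit => i)
    convert key using 1
    · ext p q
      obtain ⟨p, rfl⟩ := E.symm.surjective p
      obtain ⟨q, rfl⟩ := E.symm.surjective q
      simp only [submatrix_apply, Equiv.apply_symm_apply]
      have := congrFun (congrFun (AT_union T {i1} hd) ((Equiv.refl _).sumCongr (e.trans (sEquiv i1)) p)) ((Equiv.refl _).sumCongr (e.trans (sEquiv i1)) q)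
      simp only [submatrix_apply] at this
      refine this.trans ?_
      have h1 := AT_single i1
      have h2 : (AT {i1}).submatrix (sEquiv i1 ∘ e) (sEquiv i1 ∘ e) = fromBlocks C (-F) 0 (AT T) := by
        rw [← Matrix.submatrix_submatrix, h1]; simp [i1]
      rcases p with p | p <;> rcases q with q | q
      · rfl
      · rfl
      · rfl
      · exact congrFun (congrFun h2 p) q
    · ext p q
      obtain ⟨p, rfl⟩ := E.symm.surjective p
      simp only [submatrix_apply, Equiv.apply_symm_apply]
      have := congrFun (congrFun (bT_union T {i1} hd) ((Equiv.refl _).sumCongr (e.trans (sEquiv i1)) p)) q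
      simp only [submatrix_apply] at this
      refine this.trans ?_
      rcases p with p | p
      · rfl
      · show (fromRows 0 (bT T)) (e.symm (e p)) q = _
        simp
    · ext u p
      obtain ⟨p, rfl⟩ := E.symm.surjective p
      simp only [submatrix_apply, Equiv.apply_symm_apply]
      rcases p with p | p
      · have : ∀ a, (⟨i1, a⟩ : GI R) ≠ p.1 := fun a h => hi (by
          have := p.2; rw [← h] at this; exact this)
        show ((∑ j, C i j • Finsupp.single (⟨i1, e (Sum.inl j)⟩ : GI R) (1 : R) - c i : GI R →₀ R)) p.1 = _
        simp [Finsupp.finsetSum_apply, Finsupp.single_apply, this]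
        rfl
      · show ((∑ j, C i j • Finsupp.single (⟨i1, e (Sum.inl j)⟩ : GI R) (1 : R) - c i : GI R →₀ R)) ⟨i1, e p⟩ = _
        have h0 : c i ⟨i1, e p⟩ = 0 := hs _ _ hi
        rcases p with p | p
        · simp [Finsupp.finsetSum_apply, Finsupp.single_apply, h0]
        · simp [Finsupp.finsetSum_apply, Finsupp.single_apply, h0]

theorem NN_ne_top (hT : Triv R) [hR : Nontrivial R] : ∃ y, y ∉ NN hT := by
  have hf : Full (1 : Matrix (Fin 1) (Fin 1) R) := by
    have := (full_one_unit hR).reindex (Equiv.ofUnique (Fin 1) Unit)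
    simpa using this
  let i0 : Idx R := ⟨0, 1, 1, fun _ _ => 1, hf⟩
  refine ⟨Finsupp.single ⟨i0, (0 : Fin 1)⟩ 1, ?_⟩
  rintro ⟨T, h⟩
  have h := h.mono (Finset.subset_insert i0 T)
  set S := insert i0 T
  have hi : i0 ∈ S := Finset.mem_insert_self _ _
  refine Cert.single_false hT hR (AT_full hT S) (⟨⟨i0, (0 : Fin 1)⟩, hi⟩ : KT S) ?_ rfl _ ?_ h.2
  · rintro ⟨⟨i, a⟩, h⟩
    by_cases hii : i0 = i
    · subst hii
      have : a = (0 : Fin 1) := Subsingleton.elim (α := Fin 1) _ _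
      subst this
      simp only [if_true]
      exact blockDiagonal'_apply_eq (fun i : Idx R => i.A) i0 (0 : Fin 1) (0 : Fin 1)
    · rw [if_neg (fun hh => hii (by rw [Subtype.mk.injEq, Sigma.mk.injEq] at hh; exact hh.1.symm))]
      exact gA_ne (p := ⟨i0, (0 : Fin 1)⟩) (q := ⟨i, a⟩) hii
  · rintro p
    simp [rowT, Finsupp.single_apply, Subtype.ext_iff, eq_comm]

theorem exists_module (hT : Triv R) [hR : Nontrivial R] :
    ∃ (M : Type) (_ : AddCommGroup M) (_ : Module R M) (_ : Nontrivial M),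
      ∀ (σ : Type) [Fintype σ] (C : Matrix σ σ R), Full C →
        Function.Bijective (fun (m : σ → M) (i : σ) => ∑ j, C i j • m j) := by
  refine ⟨(GI R →₀ R) ⧸ NN hT, inferInstance, inferInstance, ?_, ?_⟩
  · obtain ⟨y, hy⟩ := NN_ne_top hT
    exact ⟨⟨Submodule.Quotient.mk y, 0, by simpa [Submodule.Quotient.mk_eq_zero] using hy⟩⟩
  · intro σ _ C hC
    have hmk : ∀ (y : σ → GI R →₀ R) i, ∑ j, C i j • (Submodule.Quotient.mk (y j) : (GI R →₀ R) ⧸ NN hT)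
        = Submodule.Quotient.mk (∑ j, C i j • y j) := by
      intro y i
      rw [← Submodule.mkQ_apply (NN hT), map_sum]
      simp
    constructor
    · intro m m' h
      have h : ∀ i, ∑ j, C i j • (m j - m' j) = 0 := by
        intro i
        have := congrFun h i
        simp only [smul_sub, Finset.sum_sub_distrib, this, sub_self] 
      have : ∀ j, ∃ y : GI R →₀ R, (Submodule.Quotient.mk y : (GI R →₀ R) ⧸ NN hT) = m j - m' j :=
        fun j => Submodule.Quotient.mk_surjective _ _
      choose y hy using this
      simp only [← hy, hmk, Submodule.Quotient.mk_eq_zero] at h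
      have := NN_inj hT hC y h
      funext j
      rw [← sub_eq_zero, ← hy, Submodule.Quotient.mk_eq_zero]
      exact this j
    · intro c
      have : ∀ j, ∃ y : GI R →₀ R, (Submodule.Quotient.mk y : (GI R →₀ R) ⧸ NN hT) = c j :=
        fun j => Submodule.Quotient.mk_surjective _ _
      choose c' hc using this
      obtain ⟨y, hy⟩ := NN_surj hT hC c'
      refine ⟨fun j => Submodule.Quotient.mk (y j), ?_⟩
      funext i
      show ∑ j, C i j • _ = _
      rw [hmk, ← hc, Submodule.Quotient.eq]
      exact hy i

end
end FT


namespace FT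
open Matrix
open scoped Classical

section
variable {R : Type} [Ring R]

theorem exists_B (hT : Triv R) [hR : Nontrivial R] :
    ∃ (B : Type) (_ : Ring B) (_ : Nontrivial B) (θ : R →+* B),
      (∀ (σ : Type) [Fintype σ] (C : Matrix σ σ R), Full C → ∀ x : Matrix σ Unit B,
        ∃ u : Matrix σ Unit B, C.map θ * u = x) ∧
      (∀ (σ : Type) [Fintype σ] (C : Matrix σ σ R), Full C → ∀ u : Matrix σ Unit B,
        C.map θ * u = 0 → u = 0) ∧
      (∀ τ : R ≃+* R, ∃ S S' : B, S * S' = 1 ∧ S' * S = 1 ∧ ∀ r, S * θ r = θ (τ r) * S) := by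
  obtain ⟨M, _, _, _, hM⟩ := exists_module hT
  let θ : R →+* AddMonoid.End ((R ≃+* R) → M) :=
    { toFun := fun r =>
        { toFun := fun m s => s r • m s
          map_zero' := by funext s; simp
          map_add' := by intro a b; funext s; simp }
      map_one' := by ext m s; show s 1 • m s = m s; simp
      map_mul' := by intro a b; ext m s; show s (a * b) • m s = s a • s b • m s; simp [mul_smul]
      map_zero' := by ext m s; show s 0 • m s = 0; simp
      map_add' := by intro a b; ext m s; show s (a + b) • m s = s a • m s + s b • m s; simp [add_smul] }
  have hθ : ∀ r (m : ((R ≃+* R) → M)) s, θ r m s = s r • m s := fun _ _ _ => rfl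
  have hfull : ∀ (σ : Type) [Fintype σ] (C : Matrix σ σ R), Full C → ∀ s : R ≃+* R,
      Full (C.map s) := by
    intro σ _ C hC s
    apply Full.map_of (s.symm : R →+* R)
    convert hC
    ext; simp
  have hNT : Nontrivial (AddMonoid.End ((R ≃+* R) → M)) := by
    obtain ⟨m, hm⟩ := exists_ne (0 : M)
    refine ⟨⟨1, 0, fun h => hm ?_⟩⟩
    have := congrFun (DFunLike.congr_fun h (fun _ => m)) (RingEquiv.refl R)
    simpa using this
  have key : ∀ (σ : Type) [Fintype σ] (C : Matrix σ σ R) (u : Matrix σ Unit (AddMonoid.End ((R ≃+* R) → M)))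
      (i : σ) (m : ((R ≃+* R) → M)) (s : R ≃+* R), ((C.map θ * u) i ()) m s = ∑ j, s (C i j) • (u j () m s) := by
    intro σ _ C u i m s
    rw [Matrix.mul_apply]
    have : ∀ (t : Finset σ), (∑ j ∈ t, C.map θ i j * u j ()) m s = ∑ j ∈ t, s (C i j) • (u j () m s) := by
      intro t
      induction t using Finset.induction_on with
      | empty => simp
      | insert a t ha ih => 
        rw [Finset.sum_insert ha, Finset.sum_insert ha, ← ih]
        rfl
    exact this _
  refine ⟨AddMonoid.End ((R ≃+* R) → M), inferInstance, hNT, θ, ?_, ?_, ?_⟩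
  · intro σ _ C hC x
    have hb := fun s : R ≃+* R => hM σ (C.map s) (hfull σ C hC s)
    let L : (R ≃+* R) → ((σ → M) ≃+ (σ → M)) := fun s => AddEquiv.ofBijective
      ({ toFun := fun (m : σ → M) (i : σ) => ∑ j, (C.map s) i j • m j
         map_zero' := by funext i; simp
         map_add' := by intro a b; funext i; simp [Finset.sum_add_distrib] } : (σ → M) →+ (σ → M))
      (hb s)
    have hL : ∀ s m i, L s m i = ∑ j, s (C i j) • m j := fun _ _ _ => rfl
    refine ⟨fun j _ => { toFun := fun m s => (L s).symm (fun i => x i () m s) j, map_zero' := ?_, map_add' := ?_ }, ?_⟩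
    · funext s
      have : (fun i => x i () (0 : ((R ≃+* R) → M)) s) = 0 := by funext i; simp
      rw [this]; simp
    · intro a b
      funext s
      have : (fun i => x i () (a + b) s) = (fun i => x i () a s) + (fun i => x i () b s) := by
        funext i; simp
      rw [this, map_add]; rfl
    · ext i u m s
      refine (key σ C _ i m s).trans ?_
      have := hL s ((L s).symm (fun i => x i () m s)) i
      rw [AddEquiv.apply_symm_apply] at this
      exact this.symm
  · intro σ _ C hC u hu
    ext j a m s
    have hb := (hM σ (C.map s) (hfull σ C hC s)).1
    have : (fun j => u j () m s) = 0 := by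
      apply hb
      funext i
      have := key σ C u i m s
      rw [hu] at this
      simp only [Matrix.map_apply, ← this]
      simp
    exact congrFun this j
  · intro τ
    refine ⟨{ toFun := fun m s => m (τ.trans s), map_zero' := rfl, map_add' := fun _ _ => rfl },
      { toFun := fun m s => m (τ.symm.trans s), map_zero' := rfl, map_add' := fun _ _ => rfl },
      ?_, ?_, ?_⟩
    · ext m s; show m _ = m _; congr 1; ext; simp
    · ext m s; show m _ = m _; congr 1; ext; simp
    · intro r; ext m s; rfl

def sc {B : Type} (p : B) : Matrix Unit Unit B := fun _ _ => p

theorem sc_inj {B : Type} {p q : B} (h : sc p = sc q) : p = q := congrFun (congrFun h ()) ()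

theorem sc_mul {B : Type} [Ring B] (p q : B) : sc (p * q) = sc p * sc q := by
  ext; simp [sc, Matrix.mul_apply]

def QRep {B : Type} [Ring B] (θ : R →+* B) (p : B) : Prop :=
  ∃ (κ : Type) (_ : Fintype κ) (A : Matrix κ κ R) (f : Matrix Unit κ R) (x : Matrix κ Unit R)
    (u : Matrix κ Unit B), Full A ∧ A.map θ * u = x.map θ ∧ sc p = f.map θ * u

section
variable {B : Type} [Ring B] (θ : R →+* B)

theorem QRep.of [Nontrivial R] (r : R) : QRep θ (θ r) :=
  ⟨Unit, inferInstance, 1, 1, sc r, sc (θ r), full_one_unit inferInstance, by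
    ext; simp [sc, Matrix.mul_apply], by ext; simp [sc, Matrix.mul_apply]⟩

variable {θ}

theorem QRep.mul (hT : Triv R) {p q : B} (hp : QRep θ p) (hq : QRep θ q) : QRep θ (p * q) := by
  obtain ⟨κ, _, A, f, x, u, hA, h1, h2⟩ := hp
  obtain ⟨κ', _, A', f', x', u', hA', h1', h2'⟩ := hq
  refine ⟨κ ⊕ κ', inferInstance, fromBlocks A (-(x * f')) 0 A', fromCols f 0, fromRows 0 x',
    fromRows (u * sc q) u', Full.blocks hT hA hA' _, ?_, ?_⟩
  · have : (fromBlocks A (-(x * f')) 0 A').map θ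
      = fromBlocks (A.map θ) (-(x.map θ * f'.map θ)) 0 (A'.map θ) := by
      rw [← Matrix.map_mul]
      ext (i | i) (j | j) <;> simp [-Matrix.map_mul]
    rw [this, fromBlocks_mul_fromRows, Matrix.neg_mul, Matrix.mul_assoc, ← h2', ← Matrix.mul_assoc,
      h1, h1']
    ext (i | i) j <;> simp
  · have : (fromCols f (0 : Matrix Unit κ' R)).map θ = fromCols (f.map θ) 0 := by
      ext i (j | j) <;> simp
    rw [this, fromCols_mul_fromRows, sc_mul, h2, Matrix.mul_assoc]; simp

theorem QRep.add (hT : Triv R) {p q : B} (hp : QRep θ p) (hq : QRep θ q) : QRep θ (p + q) := by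
  obtain ⟨κ, _, A, f, x, u, hA, h1, h2⟩ := hp
  obtain ⟨κ', _, A', f', x', u', hA', h1', h2'⟩ := hq
  refine ⟨κ ⊕ κ', inferInstance, fromBlocks A 0 0 A', fromCols f f', fromRows x x',
    fromRows u u', Full.blocks hT hA hA' _, ?_, ?_⟩
  · have : (fromBlocks A 0 0 A').map θ
      = fromBlocks (A.map θ) 0 0 (A'.map θ) := by
      ext (i | i) (j | j) <;> simp
    rw [this, fromBlocks_mul_fromRows, h1, h1']
    ext (i | i) j <;> simp
  · have : (fromCols f f').map θ = fromCols (f.map θ) (f'.map θ) := by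
      ext i (j | j) <;> simp
    rw [this, fromCols_mul_fromRows, ← h2, ← h2']; rfl

theorem QRep.inv (hT : Triv R)
    (hs : ∀ (σ : Type) [Fintype σ] (C : Matrix σ σ R), Full C → ∀ x : Matrix σ Unit B,
        ∃ u : Matrix σ Unit B, C.map θ * u = x)
    (hi : ∀ (σ : Type) [Fintype σ] (C : Matrix σ σ R), Full C → ∀ u : Matrix σ Unit B,
        C.map θ * u = 0 → u = 0) {p : B} (hp : QRep θ p) : p = 0 ∨ ∃ q, QRep θ q ∧ p * q = 1 := by
  obtain ⟨κ, _, A, f, x, u, hA, h1, h2⟩ := hp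
  by_cases hM : Full (fromBlocks A x f (0 : Matrix Unit Unit R))
  · right
    obtain ⟨w, hw⟩ := hs _ _ hM (fromRows 0 1)
    have hmap : (fromBlocks A x f (0 : Matrix Unit Unit R)).map θ =
        fromBlocks (A.map θ) (x.map θ) (f.map θ) 0 := by
      ext (i | i) (j | j) <;> simp
    have hw0 := hw
    rw [hmap, ← fromRows_toRows w, fromBlocks_mul_fromRows, fromRows_ext_iff] at hw
    obtain ⟨e1, e2⟩ := hw
    set y := w.toRows₁
    set q := w.toRows₂
    have hy : y + u * q = 0 := by
      apply hi _ _ hA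
      rw [Matrix.mul_add, ← Matrix.mul_assoc, h1, e1]
    have hy : y = -(u * q) := eq_neg_of_add_eq_zero_left hy
    rw [hy, Matrix.mul_neg, ← Matrix.mul_assoc, ← h2] at e2
    refine ⟨-(q () ()), ⟨_, inferInstance, _, fromCols 0 (-1), fromRows 0 1, w, hM, ?_, ?_⟩, ?_⟩
    · rw [hw0]; ext (i | i) j <;> simp
    · have : (fromCols (0 : Matrix Unit κ R) (-1 : Matrix Unit Unit R)).map θ = fromCols 0 (-1) := by
        ext i (j | j) <;> simp
      rw [this, ← fromRows_toRows w, fromCols_mul_fromRows]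
      ext; simp [sc]; rfl
    · have := congrFun (congrFun e2 ()) ()
      simpa [Matrix.mul_apply, sc] using this
  · left
    unfold Full at hM
    push Not at hM
    obtain ⟨ρ, _, X, Y, h, hc⟩ := hM
    rw [← fromRows_toRows X, ← fromCols_toCols Y, fromRows_mul_fromCols, fromBlocks_inj] at h
    obtain ⟨e1, e2, e3, e4⟩ := h
    have hc1 : Fintype.card ρ ≤ Fintype.card κ := by simp at hc; omega
    have hc2 := hA ρ _ _ e1
    have e : κ ≃ ρ := Fintype.equivOfCardEq (by omega)
    set P := X.toRows₁
    set U := Y.toCols₁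
    have hP : Full (P.submatrix id e) := by
      refine Full.factor_left hA (U := U.submatrix e id) ?_
      rw [e1]; ext i j; simp [Matrix.mul_apply]
      exact (Equiv.sum_comp e (fun k => P i k * U k j)).symm
    set β := Y.toCols₂
    have h3 : (U.map θ * u - β.map θ).submatrix e id = 0 := by
      apply hi _ _ hP
      have : P.map θ * (U.map θ * u - β.map θ) = 0 := by
        rw [Matrix.mul_sub, ← Matrix.mul_assoc, ← Matrix.map_mul, ← Matrix.map_mul, ← e1, ← e2, h1,
          sub_self]
      rw [← this]
      ext i j
      simp only [Matrix.mul_apply, Matrix.map_apply, Matrix.submatrix_apply, id]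
      exact (Equiv.sum_comp e (fun k => θ (P i k) * (U.map θ * u - β.map θ) k j))
    have h4 : U.map θ * u = β.map θ := by
      rw [← sub_eq_zero]
      ext i j
      have := congrFun (congrFun h3 (e.symm i)) j
      simpa using this
    apply sc_inj
    rw [h2, e3, Matrix.map_mul, Matrix.mul_assoc, h4, ← Matrix.map_mul, ← e4]
    ext; simp [sc]

theorem QRep.conj {p S S' : B} (τ : R ≃+* R) (h1 : S * S' = 1) (h2 : S' * S = 1)
    (h3 : ∀ r, S * θ r = θ (τ r) * S) (hp : QRep θ p) : QRep θ (S * p * S') := by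
  obtain ⟨κ, _, A, f, x, u, hA, e1, e2⟩ := hp
  have hc : ∀ (m : Type) (Z : Matrix m κ R), (Z.map τ).map θ * (u.map (fun b => S * b * S'))
      = (Z.map θ * u).map (fun b => S * b * S') := by
    intro m Z
    ext i j
    simp only [Matrix.mul_apply, Matrix.map_apply, Finset.mul_sum, Finset.sum_mul]
    refine Finset.sum_congr rfl fun k _ => ?_
    simp only [← mul_assoc, h3]
  refine ⟨κ, inferInstance, A.map τ, f.map τ, x.map τ, u.map (fun b => S * b * S'), ?_, ?_, ?_⟩
  · apply Full.map_of (τ.symm : R →+* R)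
    convert hA
    ext; simp
  · rw [hc, e1]
    ext i j
    show S * θ (x i j) * S' = θ (τ (x i j))
    rw [h3, mul_assoc, h1, mul_one]
  · rw [hc, ← e2]; rfl

end

theorem exists_Q (hT : Triv R) [hR : Nontrivial R] :
    ∃ (Q : Type) (_ : DivisionRing Q) (θ : R →+* Q),
      (∀ (σ : Type) [Fintype σ] [DecidableEq σ] (C : Matrix σ σ R), Full C →
        ∃ D : Matrix σ σ Q, C.map θ * D = 1 ∧ D * C.map θ = 1) ∧
      (∀ τ : R ≃+* R, ∃ τ' : Q →+* Q, ∀ r, τ' (θ r) = θ (τ r)) := by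
  obtain ⟨B, _, _, θ, hs, hi, hS⟩ := exists_B hT
  let Q : Subring B :=
    { carrier := {p | QRep θ p}
      mul_mem' := fun h h' => h.mul hT h'
      one_mem' := by simpa using QRep.of θ 1
      add_mem' := fun h h' => h.add hT h'
      zero_mem' := by simpa using QRep.of θ 0
      neg_mem' := by
        intro p h
        have := (QRep.of θ (-1)).mul hT h
        simpa using this }
  have hinv : ∀ p : Q, p ≠ 0 → ∃ q : Q, p * q = 1 := by
    rintro ⟨p, hp⟩ hne
    rcases hp.inv hT hs hi with h | ⟨q, hq, e⟩
    · exact absurd (Subtype.ext h) hne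
    · exact ⟨⟨q, hq⟩, Subtype.ext e⟩
  have hu : ∀ p : Q, IsUnit p ∨ p = 0 := by
    intro p
    by_cases h : p = 0
    · exact Or.inr h
    · left
      obtain ⟨q, hq⟩ := hinv p h
      have hq0 : q ≠ 0 := by
        rintro rfl
        simp at hq
      obtain ⟨r, hr⟩ := hinv q hq0
      have : p = r := by
        calc p = p * (q * r) := by rw [hr, mul_one]
          _ = r := by rw [← mul_assoc, hq, one_mul]
      exact ⟨⟨p, q, hq, by rw [this]; exact hr⟩, rfl⟩
  let θQ : R →+* Q := θ.codRestrict Q (fun r => QRep.of θ r)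
  refine ⟨Q, DivisionRing.ofIsUnitOrEqZero hu, θQ, ?_, ?_⟩
  · intro σ _ _ C hC
    have : ∀ j : σ, ∃ u : Matrix σ Unit B, C.map θ * u = Matrix.of (fun i _ => if i = j then 1 else 0) :=
      fun j => hs σ C hC _
    choose u hu' using this
    have hmem : ∀ i j, QRep θ (u j i ()) := by
      intro i j
      refine ⟨σ, inferInstance, C, Matrix.of fun _ k => if k = i then 1 else 0, Matrix.of fun k _ => if k = j then 1 else 0, u j, hC, ?_, ?_⟩
      · rw [hu']; ext k _; simp only [Matrix.map_apply, Matrix.of_apply]; split_ifs <;> simp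
      · ext; simp only [Matrix.mul_apply, Matrix.map_apply, sc, Matrix.of_apply]
        rw [Finset.sum_eq_single i]
        · simp
        · intro b _ hb; simp [hb]
        · simp
    let D : Matrix σ σ Q := fun i j => ⟨u j i (), hmem i j⟩
    have h1 : C.map θQ * D = 1 := by
      ext i j
      have := congrFun (congrFun (hu' j) i) ()
      simp only [Matrix.mul_apply, Matrix.map_apply] at this ⊢
      simp only [AddSubmonoidClass.coe_finsetSum, MulMemClass.coe_mul]
      refine this.trans ?_
      rw [Matrix.one_apply, Matrix.of_apply]
      split_ifs <;> rfl
    let : DivisionRing Q := DivisionRing.ofIsUnitOrEqZero hu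
    exact ⟨D, h1, mul_eq_one_comm.1 h1⟩
  · intro τ
    obtain ⟨S, S', e1, e2, e3⟩ := hS τ
    refine ⟨
      { toFun := fun p => ⟨S * p.1 * S', p.2.conj τ e1 e2 e3⟩
        map_one' := Subtype.ext (by simp [e1])
        map_zero' := Subtype.ext (by simp)
        map_add' := fun a b => Subtype.ext (by simp [mul_add, add_mul])
        map_mul' := fun a b => Subtype.ext ?_ }, fun r => Subtype.ext ?_⟩
    · show S * (a.1 * b.1) * S' = (S * a.1 * S') * (S * b.1 * S')
      calc _ = S * a.1 * (1 * b.1) * S' := by simp [mul_assoc]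
        _ = _ := by rw [← e2]; simp only [mul_assoc]
    · show S * θ r * S' = θ (τ r)
      rw [e3, mul_assoc, e1, mul_one]

end
end FT


namespace FT
open Matrix
open scoped Classical

structure LB {G E : Type} [DivisionRing G] [DivisionRing E] (ι : G →+* E) where
  B : Type
  e : B → E
  c : E →+ (B →₀ G)
  c_smul : ∀ g f β, c (ι g * f) β = g * c f β
  recon : ∀ f, (c f).sum (fun β g => ι g * e β) = f
  c_e : ∀ β, c (e β) = Finsupp.single β 1

theorem exists_LB {G E : Type} [DivisionRing G] [DivisionRing E] (ι : G →+* E) :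
    Nonempty (LB ι) := by
  letI : Module G E := Module.compHom E ι
  have hs : ∀ (g : G) (f : E), g • f = ι g * f := fun _ _ => rfl
  let b := Module.Basis.ofVectorSpace G E
  exact ⟨{
    B := _
    e := b
    c := b.repr.toLinearMap.toAddMonoidHom
    c_smul := fun g f β => by
      show b.repr (ι g * f) β = g * b.repr f β
      rw [← hs]; simp
    recon := fun f => b.linearCombination_repr f
    c_e := fun β => b.repr_self β }⟩

section
variable {G E : Type} [DivisionRing G] [DivisionRing E] {ι : G →+* E} (lb : LB ι) (J : Type)

abbrev FF := List (J × lb.B) →₀ E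

variable {J}

noncomputable def VV (l : J) : AddMonoid.End (FF lb J) :=
  Finsupp.liftAddHom (fun s => (Finsupp.liftAddHom (fun β : lb.B =>
    (Finsupp.singleAddHom ((l, β) :: s)).comp ι.toAddMonoidHom)).comp lb.c)

theorem VV_single (l : J) (s : List (J × lb.B)) (f : E) :
    VV lb l (Finsupp.single s f) = (lb.c f).sum (fun β g => Finsupp.single ((l, β) :: s) (ι g)) := by
  exact Finsupp.liftAddHom_apply_single _ s f

theorem VV_nil (l : J) (η : FF lb J) : VV lb l η [] = 0 := by
  induction η using Finsupp.induction_linear with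
  | zero => simp
  | add a b ha hb => simp [ha, hb]
  | single s f =>
    rw [VV_single, Finsupp.sum, Finsupp.finsetSum_apply]
    simp

theorem VV_cons (l : J) (η : FF lb J) (l' : J) (γ : lb.B) (s : List (J × lb.B)) :
    VV lb l η ((l', γ) :: s) = if l = l' then ι (lb.c (η s) γ) else 0 := by
  induction η using Finsupp.induction_linear with
  | zero => simp
  | add a b ha hb => 
    simp only [map_add, Finsupp.add_apply, ha, hb]
    split_ifs <;> simp
  | single t f =>
    rw [VV_single, Finsupp.sum, Finsupp.finsetSum_apply]
    by_cases hl : l = l'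
    · subst hl
      by_cases ht : t = s
      · subst ht
        simp only [Finsupp.single_apply, List.cons.injEq, Prod.mk.injEq, true_and, and_true, if_true]
        rw [Finset.sum_ite_eq']
        split_ifs with h
        · rfl
        · rw [Finsupp.notMem_support_iff.1 h, map_zero]
      · simp [Finsupp.single_apply, ht]
    · simp [Finsupp.single_apply, hl]

noncomputable def EE : E →+* AddMonoid.End (FF lb J) := Module.toAddMonoidEnd E (FF lb J)

theorem EE_apply (f : E) (η : FF lb J) : EE lb f η = f • η := rfl

variable (J) in
noncomputable def RR : Subring (AddMonoid.End (FF lb J)) :=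
  Subring.closure (Set.range (EE lb) ∪ Set.range (VV lb))

noncomputable def Om : FF lb J := Finsupp.single [] 1

section W
variable {S : Type} [Ring S] (θ : E →+* S) (u : J → S)

def wd (s : List (J × lb.B)) : S := (s.map (fun a => u a.1 * θ (lb.e a.2))).prod

noncomputable def WW : FF lb J →+ S :=
  Finsupp.liftAddHom (fun s => (AddMonoidHom.mulRight (wd lb θ u s)).comp θ.toAddMonoidHom)

theorem WW_single (s : List (J × lb.B)) (f : E) :
    WW lb θ u (Finsupp.single s f) = θ f * wd lb θ u s := by
  unfold WW
  simp

theorem WW_smul (f : E) (η : FF lb J) : WW lb θ u (f • η) = θ f * WW lb θ u η := by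
  induction η using Finsupp.induction_linear with
  | zero => simp
  | add a b ha hb => simp [ha, hb, mul_add]
  | single s g => rw [Finsupp.smul_single, smul_eq_mul, WW_single, WW_single, map_mul, mul_assoc]

theorem WW_VV (hu : ∀ l g, u l * θ (ι g) = θ (ι g) * u l) (l : J) (η : FF lb J) :
    WW lb θ u (VV lb l η) = u l * WW lb θ u η := by
  induction η using Finsupp.induction_linear with
  | zero => simp
  | add a b ha hb => simp [ha, hb, mul_add]
  | single s f =>
    rw [VV_single, WW_single, Finsupp.sum, map_sum]
    conv_rhs => rw [← lb.recon f, Finsupp.sum, map_sum, Finset.sum_mul, Finset.mul_sum]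
    refine Finset.sum_congr rfl fun β _ => ?_
    rw [WW_single]
    simp only [wd, List.map_cons, List.prod_cons, map_mul]
    simp only [← mul_assoc]
    rw [hu]

theorem WW_Om : WW lb θ u (Om lb) = 1 := by
  rw [Om, WW_single]; simp [wd]

theorem WW_mul (hu : ∀ l g, u l * θ (ι g) = θ (ι g) * u l) (r : AddMonoid.End (FF lb J))
    (hr : r ∈ RR lb J) (η : FF lb J) : WW lb θ u (r η) = WW lb θ u (r (Om lb)) * WW lb θ u η := by
  revert η
  induction hr using Subring.closure_induction with
  | mem x hx =>
    intro η
    rcases hx with ⟨f, rfl⟩ | ⟨l, rfl⟩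
    · rw [EE_apply, EE_apply, WW_smul, WW_smul, WW_Om, mul_one]
    · rw [WW_VV _ _ _ hu, WW_VV _ _ _ hu, WW_Om, mul_one]
  | zero => intro η; simp
  | one => intro η; simp [WW_Om]
  | add x y _ _ hx hy => 
    intro η
    have e : ∀ ζ, (x + y) ζ = x ζ + y ζ := fun _ => rfl
    rw [e, e, map_add, map_add, hx η, hy η, add_mul]
  | neg x _ hx =>
    intro η
    have e : ∀ ζ, (-x) ζ = -(x ζ) := fun _ => rfl
    rw [e, e, map_neg, map_neg, hx, neg_mul]
  | mul x y _ _ hx hy =>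
    intro η
    have e : ∀ ζ, (x * y) ζ = x (y ζ) := fun _ => rfl
    rw [e, e, hx, hy, hx (y _), mul_assoc]

noncomputable def TT (hu : ∀ l g, u l * θ (ι g) = θ (ι g) * u l) : RR lb J →+* S where
  toFun r := WW lb θ u (r.1 (Om lb))
  map_one' := WW_Om lb θ u
  map_zero' := map_zero (WW lb θ u)
  map_add' a b := map_add (WW lb θ u) (a.1 (Om lb)) (b.1 (Om lb))
  map_mul' a b := by
    show WW lb θ u (a.1 (b.1 (Om lb))) = _
    rw [WW_mul lb θ u hu a.1 a.2]

end W

variable (J) in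
noncomputable def rE : E →+* RR lb J := (EE lb).codRestrict (RR lb J)
  (fun f => Subring.subset_closure (Or.inl ⟨f, rfl⟩))

noncomputable def rV (l : J) : RR lb J := ⟨VV lb l, Subring.subset_closure (Or.inr ⟨l, rfl⟩)⟩

theorem rV_comm (l : J) (g : G) : rV lb l * rE lb J (ι g) = rE lb J (ι g) * rV lb l := by
  apply Subtype.ext
  refine AddMonoidHom.ext fun η => Finsupp.ext fun s => ?_
  show (VV lb l (ι g • η)) s = (ι g • (VV lb l η)) s
  rw [Finsupp.smul_apply]
  rcases s with _ | ⟨⟨l', γ⟩, s⟩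
  · simp [VV_nil]
  · rw [VV_cons, VV_cons]
    split_ifs
    · rw [Finsupp.smul_apply, smul_eq_mul, lb.c_smul, map_mul]; rfl
    · simp

theorem TT_E {S : Type} [Ring S] (θ : E →+* S) (u : J → S) (hu : ∀ l g, u l * θ (ι g) = θ (ι g) * u l)
    (f : E) : TT lb θ u hu (rE lb J f) = θ f := by
  show WW lb θ u (f • Om lb) = _
  rw [WW_smul, WW_Om, mul_one]

theorem TT_V {S : Type} [Ring S] (θ : E →+* S) (u : J → S) (hu : ∀ l g, u l * θ (ι g) = θ (ι g) * u l)
    (l : J) : TT lb θ u hu (rV lb l) = u l := by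
  show WW lb θ u (VV lb l (Om lb)) = _
  rw [WW_VV _ _ _ hu, WW_Om, mul_one]

theorem RR_hom_ext {S : Type} [Ring S] (f g : RR lb J →+* S)
    (h1 : ∀ x, f (rE lb J x) = g (rE lb J x)) (h2 : ∀ l, f (rV lb l) = g (rV lb l)) : f = g := by
  ext ⟨r, hr⟩
  induction hr using Subring.closure_induction with
  | mem x hx =>
    rcases hx with ⟨y, rfl⟩ | ⟨l, rfl⟩
    · exact h1 y
    · exact h2 l
  | zero => exact (map_zero f).trans (map_zero g).symm
  | one => exact (map_one f).trans (map_one g).symm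
  | add x y hx hy h h' =>
    exact (map_add f ⟨x, hx⟩ ⟨y, hy⟩).trans (Eq.trans (by rw [h, h']) (map_add g ⟨x, hx⟩ ⟨y, hy⟩).symm)
  | neg x hx h => exact (map_neg f ⟨x, hx⟩).trans (Eq.trans (by rw [h]) (map_neg g ⟨x, hx⟩).symm)
  | mul x y hx hy h h' =>
    exact (map_mul f ⟨x, hx⟩ ⟨y, hy⟩).trans (Eq.trans (by rw [h, h']) (map_mul g ⟨x, hx⟩ ⟨y, hy⟩).symm)

noncomputable def ev : RR lb J →+ FF lb J where
  toFun r := r.1 (Om lb)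
  map_zero' := rfl
  map_add' a b := rfl

noncomputable def we : FF lb J →+ RR lb J := WW lb (rE lb J) (rV lb)

theorem we_ev (r : RR lb J) : we lb (ev lb r) = r := by
  have : TT lb (rE lb J) (rV lb) (rV_comm lb) = RingHom.id _ := by
    apply RR_hom_ext
    · intro x; rw [TT_E]; rfl
    · intro x; rw [TT_V]; rfl
  exact DFunLike.congr_fun this r

theorem ev_mul (r r' : RR lb J) : ev lb (r * r') = r.1 (ev lb r') := rfl

theorem ev_E_mul (f : E) (r : RR lb J) : ev lb (rE lb J f * r) = f • ev lb r := rfl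

theorem wd_apply (s t : List (J × lb.B)) :
    (wd lb (rE lb J) (rV lb) s).1 (Finsupp.single t 1) = Finsupp.single (s ++ t) 1 := by
  induction s with
  | nil => simp [wd]
  | cons a s ih =>
    have : wd lb (rE lb J) (rV lb) (a :: s) = rV lb a.1 * rE lb J (lb.e a.2) * wd lb (rE lb J) (rV lb) s := by
      simp [wd]
    rw [this]
    show VV lb a.1 (lb.e a.2 • (wd lb (rE lb J) (rV lb) s).1 (Finsupp.single t 1)) = _
    rw [ih, Finsupp.smul_single, smul_eq_mul, mul_one, VV_single, lb.c_e, Finsupp.sum_single_index]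
    · simp
    · simp

theorem ev_we (η : FF lb J) : ev lb (we lb η) = η := by
  induction η using Finsupp.induction_linear with
  | zero => simp
  | add a b ha hb => simp [ha, hb]
  | single s f =>
    rw [we, WW_single, ev_E_mul]
    show f • (wd lb (rE lb J) (rV lb) s).1 (Finsupp.single [] 1) = _
    rw [wd_apply]; simp

theorem ev_inj {r r' : RR lb J} (h : ev lb r = ev lb r') : r = r' := by
  rw [← we_ev lb r, h, we_ev]

theorem ev_eq_zero {r : RR lb J} : ev lb r = 0 ↔ r = 0 :=
  ⟨fun h => ev_inj lb (by rw [h, map_zero]), fun h => by rw [h, map_zero]⟩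

theorem VV_len (l : J) (η : FF lb J) (s) (h : VV lb l η s ≠ 0) :
    ∃ t, η t ≠ 0 ∧ s.length = t.length + 1 := by
  rcases s with _ | ⟨⟨l', γ⟩, s⟩
  · simp [VV_nil] at h
  · rw [VV_cons] at h
    refine ⟨s, ?_, by simp⟩
    intro h0
    simp [h0] at h

theorem wd_len (s : List (J × lb.B)) (η : FF lb J) (t) (h : (wd lb (rE lb J) (rV lb) s).1 η t ≠ 0) :
    ∃ t', η t' ≠ 0 ∧ t.length = s.length + t'.length := by
  induction s generalizing t with
  | nil => exact ⟨t, by simpa [wd] using h, by simp⟩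
  | cons a s ih =>
    have : wd lb (rE lb J) (rV lb) (a :: s) = rV lb a.1 * rE lb J (lb.e a.2) * wd lb (rE lb J) (rV lb) s := by
      simp [wd]
    rw [this] at h
    obtain ⟨t1, h1, h2⟩ := VV_len lb a.1 (lb.e a.2 • (wd lb (rE lb J) (rV lb) s).1 η) t h
    obtain ⟨t2, h3, h4⟩ := ih t1 (fun h => h1 (by simp [h]))
    exact ⟨t2, h3, by simp; omega⟩

theorem mul_len (r r' : RR lb J) (s) (h : ev lb (r * r') s ≠ 0) :
    ∃ s1 s2, ev lb r s1 ≠ 0 ∧ ev lb r' s2 ≠ 0 ∧ s.length = s1.length + s2.length := by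
  have key : ∀ (ξ η : FF lb J), (we lb ξ).1 η s ≠ 0 → ∃ s1 s2, ξ s1 ≠ 0 ∧ η s2 ≠ 0 ∧
      s.length = s1.length + s2.length := by
    intro ξ η h
    have e : (we lb ξ).1 η = ∑ t ∈ ξ.support, ξ t • (wd lb (rE lb J) (rV lb) t).1 η := by
      have : we lb ξ = ∑ t ∈ ξ.support, rE lb J (ξ t) * wd lb (rE lb J) (rV lb) t := by
        rw [we, WW, Finsupp.liftAddHom_apply, Finsupp.sum]; rfl
      have h2 : ∀ (T : Finset (List (J × lb.B))), (∑ t ∈ T, rE lb J (ξ t) * wd lb (rE lb J) (rV lb) t).1 η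
        = ∑ t ∈ T, ξ t • (wd lb (rE lb J) (rV lb) t).1 η := by
        intro T
        induction T using Finset.induction_on with
        | empty => rfl
        | insert a T ha ih => rw [Finset.sum_insert ha, Finset.sum_insert ha, ← ih]; rfl
      rw [this, h2]
    rw [e, Finsupp.finsetSum_apply] at h
    obtain ⟨t, ht, hne⟩ := Finset.exists_ne_zero_of_sum_ne_zero h
    obtain ⟨t', h1, h2⟩ := wd_len lb t η s (fun h => hne (by simp [h]))
    exact ⟨t, t', by simpa using ht, h1, h2⟩
  apply key
  rw [we_ev]; exact h

end
end FT


namespace FT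
open Matrix
open scoped Classical

section
variable {G E : Type} [DivisionRing G] [DivisionRing E] {ι : G →+* E} (lb : LB ι) {J : Type}

noncomputable def strip (a : J × lb.B) : FF lb J →+ FF lb J :=
  Finsupp.comapDomain.addMonoidHom (f := fun s => s ++ [a]) (fun s t h => by simpa using h)

theorem strip_apply (a : J × lb.B) (η : FF lb J) (s) : strip lb a η s = η (s ++ [a]) := rfl

theorem strip_act (a : J × lb.B) (r : AddMonoid.End (FF lb J)) (hr : r ∈ RR lb J) (η : FF lb J)
    (h0 : η [] = 0) : r η [] = 0 ∧ strip lb a (r η) = r (strip lb a η) := by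
  revert η
  induction hr using Subring.closure_induction with
  | mem x hx =>
    intro η h0
    rcases hx with ⟨f, rfl⟩ | ⟨l, rfl⟩
    · refine ⟨?_, ?_⟩
      · rw [EE_apply, Finsupp.smul_apply, h0, smul_zero]
      · exact Finsupp.ext fun s => rfl
    · refine ⟨VV_nil lb l η, ?_⟩
      refine Finsupp.ext fun s => ?_
      rw [strip_apply]
      rcases s with _ | ⟨⟨l', γ⟩, s⟩
      · obtain ⟨l', γ⟩ := a
        rw [VV_nil, List.nil_append, VV_cons, h0]
        simp
      · rw [List.cons_append, VV_cons, VV_cons, strip_apply]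
  | zero => intro η _; exact ⟨rfl, map_zero (strip lb a)⟩
  | one => intro η h; exact ⟨h, rfl⟩
  | add x y _ _ hx hy =>
    intro η h
    have e : ∀ ζ, (x + y) ζ = x ζ + y ζ := fun _ => rfl
    rw [e, e, map_add, (hx η h).2, (hy η h).2, Finsupp.add_apply, (hx η h).1, (hy η h).1]
    simp
  | neg x _ hx =>
    intro η h
    have e : ∀ ζ, (-x) ζ = -(x ζ) := fun _ => rfl
    rw [e, e, map_neg, (hx η h).2, Finsupp.neg_apply, (hx η h).1]
    simp
  | mul x y _ _ hx hy =>
    intro η h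
    have e : ∀ ζ, (x * y) ζ = x (y ζ) := fun _ => rfl
    rw [e, e]
    exact ⟨(hx _ (hy η h).1).1, by rw [(hx _ (hy η h).1).2, (hy η h).2]⟩

noncomputable def st (a : J × lb.B) : RR lb J →+ RR lb J := (we lb).comp ((strip lb a).comp (ev lb))

theorem ev_st (a : J × lb.B) (r : RR lb J) (s) : ev lb (st lb a r) s = ev lb r (s ++ [a]) := by
  show ev lb (we lb _) s = _
  rw [ev_we]; rfl

theorem st_mul (a : J × lb.B) (r z : RR lb J) (h : ev lb z [] = 0) :
    st lb a (r * z) = r * st lb a z := by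
  apply ev_inj
  have := (strip_act lb a r.1 r.2 (ev lb z) h).2
  show ev lb (we lb _) = r.1 (ev lb (we lb _))
  rw [ev_we, ev_we]
  exact this

theorem ev_rE (f : E) : ev lb (rE lb J f) = Finsupp.single [] f := by
  show f • Finsupp.single [] (1:E) = _
  simp

theorem mul_homog {x z : RR lb J} {d : ℕ} {P : ℕ → Prop} (hx : ∀ s, ev lb x s ≠ 0 → s.length = d)
    (hz : ∀ s, ev lb z s ≠ 0 → P (d + s.length)) (s) (h : ev lb (x * z) s ≠ 0) : P s.length := by
  obtain ⟨s1, s2, h1, h2, h3⟩ := mul_len lb x z s h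
  rw [h3, hx _ h1]
  exact hz _ h2

theorem lemH {m n : Type} [Fintype n] (X : m → n → RR lb J) (d : n → ℕ)
    (N : ℕ) : ∀ (z : n → RR lb J) (_ : ∀ i s, ev lb (z i) s ≠ 0 → d i + s.length = N)
      (_ : ∀ a, ∑ i, X a i * z i = 0) (_ : ∃ i, z i ≠ 0),
      ∃ (i0 : n) (r : n → RR lb J), z i0 ≠ 0 ∧ r i0 = 0 ∧
        (∀ j s, ev lb (r j) s ≠ 0 → d j + s.length = d i0) ∧ ∀ a, X a i0 = ∑ j, X a j * r j := by
  induction N using Nat.strong_induction_on with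
  | _ N ih =>
  intro z hz hs hne
  by_cases hc : ∃ i0, ev lb (z i0) [] ≠ 0
  · obtain ⟨i0, h0⟩ := hc
    have hd : d i0 = N := by simpa using hz i0 [] h0
    set f := ev lb (z i0) [] with hf
    have hzi : z i0 = rE lb J f := by
      apply ev_inj lb
      rw [ev_rE]
      refine Finsupp.ext fun s => ?_
      by_cases hs : s = []
      · subst hs; simp [hf]
      · rw [Finsupp.single_eq_of_ne hs]
        by_contra hne
        have := hz i0 s hne
        have : s.length = 0 := by omega
        exact hs (List.length_eq_zero_iff.1 this)
    refine ⟨i0, fun j => if j = i0 then 0 else -(z j * rE lb J f⁻¹), ?_, by simp, ?_, ?_⟩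
    · intro h; apply h0; rw [hf, h]; simp
    · intro j s h
      by_cases hj : j = i0
      · simp [hj] at h
      · simp only [hj, if_false, map_neg, Finsupp.neg_apply, ne_eq, neg_eq_zero] at h
        obtain ⟨s1, s2, h1, h2, h3⟩ := mul_len lb _ _ s h
        rw [ev_rE] at h2
        have : s2 = [] := by
          by_contra hh
          rw [Finsupp.single_eq_of_ne hh] at h2; exact h2 rfl
        subst this
        have := hz _ _ h1
        rw [h3, hd]; simpa using this
    · intro a
      have h1 := hs a
      rw [← Finset.add_sum_erase _ _ (Finset.mem_univ i0)] at h1 ⊢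
      simp only [if_true, mul_zero, zero_add]
      have h2 : ∑ x ∈ Finset.univ.erase i0, X a x * (if x = i0 then 0 else -(z x * rE lb J f⁻¹))
        = - (∑ x ∈ Finset.univ.erase i0, X a x * z x) * rE lb J f⁻¹ := by
        rw [neg_mul, Finset.sum_mul, ← Finset.sum_neg_distrib]
        refine Finset.sum_congr rfl fun x hx => ?_
        rw [if_neg (Finset.ne_of_mem_erase hx), mul_neg, mul_assoc]
      rw [h2, ← eq_neg_of_add_eq_zero_left h1, hzi, mul_assoc, ← map_mul, mul_inv_cancel₀ h0, map_one,
        mul_one]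
  · push Not at hc
    obtain ⟨i1, h1⟩ := hne
    have h2 : ev lb (z i1) ≠ 0 := fun h => h1 ((ev_eq_zero lb).1 h)
    obtain ⟨s, hs1⟩ := Finsupp.ne_iff.1 h2
    rcases List.eq_nil_or_concat s with rfl | ⟨s', a, rfl⟩
    · exact absurd (hc i1) hs1
    rw [List.concat_eq_append] at hs1
    have hl := hz i1 _ hs1
    simp at hl
    obtain ⟨i0, r, ha, hb, hcc, hdd⟩ := ih (N - 1) (by omega) (fun i => st lb a (z i)) (by
        intro i s h
        rw [ev_st] at h
        have := hz i _ h
        simp at this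
        omega) (by
        intro c
        have := congrArg (st lb a) (hs c)
        rw [map_sum, map_zero] at this
        rw [← this]
        exact Finset.sum_congr rfl fun i _ => (st_mul lb a _ _ (hc i)).symm) ⟨i1, fun h => hs1 (by
          rw [← ev_st, h]; simp)⟩
    exact ⟨i0, r, fun h => ha (by simp only [h, map_zero]), hb, hcc, hdd⟩

noncomputable def hp (P : ℕ → Prop) : RR lb J →+ RR lb J :=
  (we lb).comp ((Finsupp.filterAddHom (fun s => P s.length)).comp (ev lb))

theorem ev_hp (P : ℕ → Prop) (r : RR lb J) (s) :
    ev lb (hp lb P r) s = if P s.length then ev lb r s else 0 := by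
  show ev lb (we lb _) s = _
  rw [ev_we]
  exact Finsupp.filter_apply _ _ _

theorem hp_id (P : ℕ → Prop) (r : RR lb J) (h : ∀ s, ev lb r s ≠ 0 → P s.length) : hp lb P r = r := by
  apply ev_inj
  refine Finsupp.ext fun s => ?_
  rw [ev_hp]
  split_ifs with h1
  · rfl
  · by_contra h2; exact h1 (h s (Ne.symm h2))

theorem hp_zero (P : ℕ → Prop) (r : RR lb J) (h : ∀ s, ev lb r s ≠ 0 → ¬ P s.length) :
    hp lb P r = 0 := by
  apply ev_inj
  refine Finsupp.ext fun s => ?_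
  rw [ev_hp, map_zero]
  split_ifs with h1
  · by_contra h2; exact h s h2 h1
  · rfl

theorem hp_mul (x z : RR lb J) (d N : ℕ) (hx : ∀ s, ev lb x s ≠ 0 → s.length ≤ d)
    (hz : ∀ s, ev lb z s ≠ 0 → d + s.length ≤ N) :
    hp lb (· = N) (x * z) = hp lb (· = d) x * hp lb (fun l => d + l = N) z := by
  have e : x * z = hp lb (· = d) x * hp lb (fun l => d + l = N) z
    + ((x - hp lb (· = d) x) * z + hp lb (· = d) x * (z - hp lb (fun l => d + l = N) z)) := by
    noncomm_ring
  have hs : ∀ (P : ℕ → Prop) (r : RR lb J) s, ev lb (r - hp lb P r) s ≠ 0 → ¬ P s.length ∧ ev lb r s ≠ 0 := by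
    intro P r s h
    rw [map_sub, Finsupp.sub_apply, ev_hp] at h
    split_ifs at h with h1
    · simp at h
    · exact ⟨h1, by simpa using h⟩
  have hs' : ∀ (P : ℕ → Prop) (r : RR lb J) s, ev lb (hp lb P r) s ≠ 0 → P s.length ∧ ev lb r s ≠ 0 := by
    intro P r s h
    rw [ev_hp] at h
    split_ifs at h with h1
    · exact ⟨h1, h⟩
    · simp at h
  rw [e, map_add, map_add,
    hp_id lb (· = N) (hp lb (· = d) x * hp lb (fun l => d + l = N) z),
    hp_zero lb (· = N) ((x - hp lb (· = d) x) * z),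
    hp_zero lb (· = N) (hp lb (· = d) x * (z - hp lb (fun l => d + l = N) z)), add_zero, add_zero]
  · intro s h
    obtain ⟨s1, s2, h1, h2, h3⟩ := mul_len lb _ _ s h
    have a1 := hs' _ _ _ h1
    have a2 := hs _ _ _ h2
    have a3 := hz _ a2.2
    omega
  · intro s h
    obtain ⟨s1, s2, h1, h2, h3⟩ := mul_len lb _ _ s h
    have a1 := hs _ _ _ h1
    have a2 := hx _ a1.2
    have a3 := hz _ h2
    omega
  · intro s h
    obtain ⟨s1, s2, h1, h2, h3⟩ := mul_len lb _ _ s h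
    have a1 := hs' _ _ _ h1
    have a2 := hs' _ _ _ h2
    omega

noncomputable def dg (r : RR lb J) : ℕ := (ev lb r).support.sup (fun s => s.length + 1)

theorem dg_le (r : RR lb J) (k : ℕ) : dg lb r ≤ k ↔ ∀ s, ev lb r s ≠ 0 → s.length + 1 ≤ k := by
  unfold dg
  rw [Finset.sup_le_iff]
  simp

noncomputable def wc {m n : Type} [Fintype m] (X : Matrix m n (RR lb J)) (i : n) : ℕ :=
  Finset.univ.sup (fun a => dg lb (X a i))

theorem wc_le {m n : Type} [Fintype m] (X : Matrix m n (RR lb J)) (i : n) (k : ℕ) :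
    wc lb X i ≤ k ↔ ∀ a s, ev lb (X a i) s ≠ 0 → s.length + 1 ≤ k := by
  unfold wc
  rw [Finset.sup_le_iff]
  simp [dg_le]

theorem triv_step {m n p : Type} [Fintype m] [Fintype n] [Fintype p] (X : Matrix m n (RR lb J))
    (Y : Matrix n p (RR lb J)) (hXY : X * Y = 0)
    (hne : ∃ i, (∃ a, X a i ≠ 0) ∧ ∃ b, Y i b ≠ 0) :
    ∃ M : Matrix n n (RR lb J), M * M = 0 ∧ ∑ i, wc lb (X * (1 - M)) i < ∑ i, wc lb X i := by
  obtain ⟨i1, hi1, b, hb⟩ := hne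
  let z : n → RR lb J := fun i => if (∃ a, X a i ≠ 0) then Y i b else 0
  let d : n → ℕ := fun i => wc lb X i - 1
  have hXd : ∀ a i s, ev lb (X a i) s ≠ 0 → s.length ≤ d i := by
    intro a i s h
    have := (wc_le lb X i _).1 le_rfl a s h
    show _ ≤ wc lb X i - 1
    omega
  have hsum : ∀ a, ∑ i, X a i * z i = 0 := by
    intro a
    have := congrFun (congrFun hXY a) b
    rw [Matrix.mul_apply] at this
    rw [show (0 : RR lb J) = (0 : Matrix m p (RR lb J)) a b from rfl, ← this]
    refine Finset.sum_congr rfl fun i _ => ?_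
    by_cases h : ∃ a, X a i ≠ 0
    · simp only [z, if_pos h]
    · push Not at h
      rw [h a, zero_mul, zero_mul]
  let T : Finset (Σ _ : n, List (J × lb.B)) := Finset.univ.sigma (fun i => (ev lb (z i)).support)
  have hzi1 : z i1 ≠ 0 := by
    simp only [z, if_pos hi1]; exact hb
  have hT : T.Nonempty := by
    have : ev lb (z i1) ≠ 0 := fun h => hzi1 ((ev_eq_zero lb).1 h)
    obtain ⟨s, hs⟩ := Finsupp.ne_iff.1 this
    exact ⟨⟨i1, s⟩, by simp only [T, Finset.mem_sigma, Finset.mem_univ, true_and, Finsupp.mem_support_iff]; exact hs⟩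
  obtain ⟨⟨i2, s2⟩, hm, hmax⟩ := Finset.exists_max_image T (fun q => d q.1 + q.2.length) hT
  simp only [T, Finset.mem_sigma, Finset.mem_univ, true_and, Finsupp.mem_support_iff] at hm hmax
  let N := d i2 + s2.length
  have hzN : ∀ i s, ev lb (z i) s ≠ 0 → d i + s.length ≤ N := fun i s h => hmax ⟨i, s⟩ h
  obtain ⟨i0, r, h1, h2, h3, h4⟩ := lemH lb (fun a i => hp lb (· = d i) (X a i)) d N
    (fun i => hp lb (fun l => d i + l = N) (z i)) (by
      intro i s h
      rw [ev_hp] at h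
      split_ifs at h with h1
      · exact h1
      · simp at h) (by
      intro a
      have := congrArg (hp lb (· = N)) (hsum a)
      rw [map_sum, map_zero] at this
      rw [← this]
      exact Finset.sum_congr rfl fun i _ => (hp_mul lb _ _ _ _ (hXd a i) (hzN i)).symm)
      ⟨i2, fun h => hm (by
        have := congrArg (fun q => ev lb q s2) h
        simp only [ev_hp, map_zero] at this
        simpa [N] using this)⟩
  let M : Matrix n n (RR lb J) := Matrix.of fun j i => if i = i0 then r j else 0
  have hM : ∀ j i, M j i = if i = i0 then r j else 0 := fun _ _ => rfl
  refine ⟨M, ?_, ?_⟩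
  · refine Matrix.ext fun j i => ?_
    rw [Matrix.mul_apply]
    simp only [hM]
    by_cases hi : i = i0
    · simp [hi, h2]
    · simp [hi]
  have hcol : ∀ a i, (X * (1 - M) : Matrix m n (RR lb J)) a i = if i = i0 then X a i0 - ∑ j, X a j * r j else X a i := by
    intro a i
    rw [Matrix.mul_sub, Matrix.mul_one, Matrix.sub_apply, Matrix.mul_apply]
    simp only [hM]
    by_cases hi : i = i0
    · simp [hi]
    · simp [hi]
  have hw0 : 1 ≤ wc lb X i0 := by
    by_contra hcon
    have hcon : wc lb X i0 ≤ 0 := by omega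
    rw [wc_le] at hcon
    apply h1
    have : ¬ ∃ a, X a i0 ≠ 0 := by
      rintro ⟨a, ha⟩
      have : ev lb (X a i0) ≠ 0 := fun h => ha ((ev_eq_zero lb).1 h)
      obtain ⟨s, hs⟩ := Finsupp.ne_iff.1 this
      have := hcon a s hs
      omega
    simp only [z, if_neg this, map_zero]
  have hlt : wc lb (X * (1 - M)) i0 < wc lb X i0 := by
    suffices wc lb (X * (1 - M)) i0 ≤ d i0 by
      have e : d i0 = wc lb X i0 - 1 := rfl
      omega
    rw [wc_le]
    intro a s h
    rw [hcol, if_pos rfl] at h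
    have hz : hp lb (· = d i0) (X a i0 - ∑ j, X a j * r j) = 0 := by
      rw [map_sub, map_sum, sub_eq_zero]
      refine (h4 a).trans (Finset.sum_congr rfl fun j _ => ?_)
      rw [hp_mul lb _ _ (d j) _ (hXd a j) (fun s h => (h3 j s h).le), hp_id lb _ (r j) (h3 j)]
    have hle : s.length ≤ d i0 := by
      rw [map_sub, Finsupp.sub_apply] at h
      by_cases h0 : ev lb (X a i0) s = 0
      · rw [h0, zero_sub, neg_ne_zero, map_sum, Finsupp.finsetSum_apply] at h
        obtain ⟨j, _, hj⟩ := Finset.exists_ne_zero_of_sum_ne_zero h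
        obtain ⟨s1, s2, h5, h6, h7⟩ := mul_len lb _ _ s hj
        have := hXd _ _ _ h5
        have := h3 _ _ h6
        omega
      · exact hXd _ _ _ h0
    have hne : s.length ≠ d i0 := by
      intro he
      apply h
      have := congrArg (fun q => ev lb q s) hz
      simpa only [ev_hp, if_pos he, map_zero, Finsupp.zero_apply] using this
    omega
  refine Finset.sum_lt_sum ?_ ⟨i0, Finset.mem_univ _, hlt⟩
  intro i _
  by_cases hi : i = i0
  · rw [hi]; exact hlt.le
  · apply le_of_eq
    unfold wc
    refine Finset.sup_congr rfl fun a _ => ?_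
    rw [hcol, if_neg hi]

theorem triv_RR : Triv (RR lb J) := by
  intro m n p _ _ _ X Y hXY
  induction hD : ∑ i, wc lb X i using Nat.strong_induction_on generalizing X Y with
  | _ D ih =>
  by_cases hne : ∃ i, (∃ a, X a i ≠ 0) ∧ ∃ b, Y i b ≠ 0
  · obtain ⟨M, hM, hlt⟩ := triv_step lb X Y hXY hne
    have e1 : (1 - M) * (1 + M) = 1 := by
      rw [sub_mul, one_mul, mul_add, hM]; simp
    obtain ⟨n1, n2, i1, i2, K, Y1, X2, L, hc, hY, hX⟩ := ih _ (hD ▸ hlt) (X * (1 - M)) ((1 + M) * Y) (by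
      rw [Matrix.mul_assoc, ← Matrix.mul_assoc (1 - M), e1, Matrix.one_mul, hXY]) rfl
    refine ⟨n1, n2, i1, i2, (1 - M) * K, Y1, X2, L * (1 + M), hc, ?_, ?_⟩
    · rw [Matrix.mul_assoc, ← hY, ← Matrix.mul_assoc, e1, Matrix.one_mul]
    · rw [← Matrix.mul_assoc, ← hX, Matrix.mul_assoc, e1, Matrix.mul_one]
  · refine ⟨{i // ∀ a, X a i = 0}, {i // ¬ ∀ a, X a i = 0}, inferInstance, inferInstance,
      Matrix.of fun i k => if i = k.1 then 1 else 0, Matrix.of fun k b => Y k.1 b,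
      Matrix.of fun a k => X a k.1, Matrix.of fun k i => if i = k.1 then 1 else 0, ?_, ?_, ?_⟩
    · rw [Fintype.card_subtype_compl]
      have := Fintype.card_subtype_le (fun i => ∀ a, X a i = 0)
      omega
    · refine Matrix.ext fun i b => ?_
      rw [Matrix.mul_apply]
      simp only [Matrix.of_apply, ite_mul, one_mul, zero_mul]
      by_cases hi : ∀ a, X a i = 0
      · rw [Finset.sum_eq_single ⟨i, hi⟩]
        · simp
        · intro k _ hk
          rw [if_neg]
          intro h; exact hk (Subtype.ext h.symm)
        · simp
      · rw [Finset.sum_eq_zero]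
        · by_contra h
          push Not at hi
          exact hne ⟨i, hi, b, h⟩
        · intro k _
          rw [if_neg]
          intro h; exact hi (h ▸ k.2)
    · refine Matrix.ext fun a i => ?_
      rw [Matrix.mul_apply]
      simp only [Matrix.of_apply, mul_ite, mul_one, mul_zero]
      by_cases hi : ∀ a, X a i = 0
      · rw [Finset.sum_eq_zero]
        · exact hi a
        · intro k _
          rw [if_neg]
          intro h; exact k.2 (h ▸ hi)
      · rw [Finset.sum_eq_single ⟨i, hi⟩]
        · simp
        · intro k _ hk
          rw [if_neg]
          intro h; exact hk (Subtype.ext h.symm)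
        · simp

end
end FT


namespace FT
open Matrix
open scoped Classical

structure Laur (F E : Type) [DivisionRing F] [DivisionRing E] where
  C : F →+* E
  cf : ℤ → E →+ F
  c : E
  cf_left : ∀ k f x, cf k (C f * x) = f * cf k x
  cf_right : ∀ k f x, cf k (x * C f) = cf k x * f
  cf_c : ∀ k x, cf k (x * c) = cf (k - 1) x
  c_comm : ∀ f, c * C f = C f * c
  bdd : ∀ x, ∃ k0, ∀ k < k0, cf k x = 0
  ext0 : ∀ x, (∀ k, cf k x = 0) → x = 0

theorem exists_laur (F : Type) [DivisionRing F] :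
    ∃ (E : Type) (_ : DivisionRing E), Nonempty (Laur F E) := by
  have hu : ∀ x : HahnSeries ℤ F, IsUnit x ∨ x = 0 := by
    intro x
    by_cases hx : x = 0
    · exact Or.inr hx
    left
    have h1 : IsUnit (HahnSeries.single x.order (1 : F)) := by
      refine ⟨⟨HahnSeries.single x.order 1, HahnSeries.single (-x.order) 1, ?_, ?_⟩, rfl⟩ <;>
      simp
    have h2 : IsUnit (LaurentSeries.powerSeriesPart x) := by
      rw [PowerSeries.isUnit_iff_constantCoeff, ← PowerSeries.coeff_zero_eq_constantCoeff_apply,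
        LaurentSeries.powerSeriesPart_coeff]
      apply IsUnit.mk0
      simpa using HahnSeries.coeff_order_eq_zero.not.2 hx
    rw [← LaurentSeries.single_order_mul_powerSeriesPart x]
    exact h1.mul (h2.map (HahnSeries.ofPowerSeries ℤ F))
  let D : DivisionRing (HahnSeries ℤ F) := DivisionRing.ofIsUnitOrEqZero hu
  refine ⟨HahnSeries ℤ F, D, ⟨{
    C := HahnSeries.C
    cf := fun k => ⟨⟨fun x => x.coeff k, rfl⟩, fun x y => rfl⟩
    c := HahnSeries.single 1 1
    cf_left := fun k f x => by
      exact HahnSeries.coeff_single_zero_mul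
    cf_right := fun k f x => by
      exact HahnSeries.coeff_mul_single_zero
    cf_c := fun k x => by
      exact (HahnSeries.coeff_mul_single (Γ' := ℤ)).trans (mul_one _)
    c_comm := fun f => by
      show HahnSeries.single 1 1 * HahnSeries.C f = HahnSeries.C f * HahnSeries.single 1 (1 : F)
      simp [HahnSeries.C_apply]
    bdd := fun x => ⟨x.order, fun k hk => HahnSeries.coeff_eq_zero_of_lt_order hk⟩
    ext0 := fun x h => HahnSeries.ext (funext h) }⟩⟩

theorem exists_left_ker {E : Type} [DivisionRing E] {κ ρ : Type} [Fintype κ] [Fintype ρ]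
    (X : Matrix κ ρ E) (h : Fintype.card ρ < Fintype.card κ) :
    ∃ p : κ → E, p ≠ 0 ∧ ∀ k, ∑ i, p i * X i k = 0 := by
  let f : (κ → E) →ₗ[E] (ρ → E) :=
    { toFun := fun p k => ∑ i, p i * X i k
      map_add' := fun p q => by
        funext k; simp [add_mul, Finset.sum_add_distrib]
      map_smul' := fun a p => by
        funext k; simp [mul_assoc, Finset.mul_sum] }
  have : LinearMap.ker f ≠ ⊥ := LinearMap.ker_ne_bot_of_finrank_lt (by simpa using h)
  obtain ⟨p, hp, h0⟩ := Submodule.exists_mem_ne_zero_of_ne_bot this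
  exact ⟨p, h0, fun k => congrFun (LinearMap.mem_ker.1 hp) k⟩

theorem exists_right_ker {E : Type} [DivisionRing E] {κ ρ : Type} [Fintype κ] [Fintype ρ]
    (Y : Matrix ρ κ E) (h : Fintype.card ρ < Fintype.card κ) :
    ∃ q : κ → E, q ≠ 0 ∧ ∀ k, ∑ j, Y k j * q j = 0 := by
  obtain ⟨p, hp, h0⟩ := exists_left_ker (E := Eᵐᵒᵖ) (Matrix.of fun j k => MulOpposite.op (Y k j)) h
  refine ⟨fun j => (p j).unop, fun h => hp (funext fun j => MulOpposite.unop_injective (congrFun h j)), fun k => ?_⟩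
  have := congrArg MulOpposite.unop (h0 k)
  simpa using this

section
variable {G E : Type} [DivisionRing G] [DivisionRing E] {ι : G →+* E} (lb : LB ι) {J : Type}

noncomputable def eps : RR lb J →+* E := TT lb (RingHom.id E) (fun _ => 0) (by simp)

theorem eps_eq (r : RR lb J) : eps lb r = ev lb r [] := by
  have key : ∀ η : FF lb J, WW lb (RingHom.id E) (fun _ => 0) η = η [] := by
    intro η
    induction η using Finsupp.induction_linear with
    | zero => simp
    | add a b ha hb => simp [ha, hb]
    | single s f =>
      rw [WW_single]
      rcases s with _ | ⟨a, s⟩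
      · simp [wd]
      · simp [wd]
  exact key _

theorem ev_lin (a b : E) (l l' : J) (γ : lb.B) :
    ev lb (rE lb J a * rV lb l * rE lb J b) [(l', γ)] = if l = l' then a * ι (lb.c b γ) else 0 := by
  have : ev lb (rE lb J a * rV lb l * rE lb J b) = a • VV lb l (ev lb (rE lb J b)) := rfl
  rw [this, ev_rE, Finsupp.smul_apply, VV_cons]
  split_ifs <;> simp

theorem full_crit {κ : Type} [Fintype κ] (N : Matrix κ κ (RR lb J))
    (h : ∀ p q : κ → E, p ≠ 0 → q ≠ 0 → (∀ j, ∑ i, p i * eps lb (N i j) = 0) →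
      (∀ i, ∑ j, eps lb (N i j) * q j = 0) →
      ∃ a, ∑ i, ∑ j, ev lb (rE lb J (p i) * N i j * rE lb J (q j)) [a] ≠ 0) : Full N := by
  intro ρ _ X Y hN
  by_contra hc
  push Not at hc
  obtain ⟨p, hp, hp0⟩ := exists_left_ker (X.map (eps lb)) hc
  obtain ⟨q, hq, hq0⟩ := exists_right_ker (Y.map (eps lb)) hc
  have hNij : ∀ i j, N i j = ∑ k, X i k * Y k j := fun i j => by rw [hN, Matrix.mul_apply]
  obtain ⟨a, ha⟩ := h p q hp hq (by
    intro j
    simp only [hNij, map_sum, map_mul, Finset.mul_sum]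
    rw [Finset.sum_comm]
    refine Finset.sum_eq_zero fun k _ => ?_
    simp only [← mul_assoc, ← Finset.sum_mul]
    rw [show ∑ i, p i * eps lb (X i k) = 0 from hp0 k, zero_mul]) (by
    intro i
    simp only [hNij, map_sum, map_mul, Finset.sum_mul]
    rw [Finset.sum_comm]
    refine Finset.sum_eq_zero fun k _ => ?_
    simp only [mul_assoc, ← Finset.mul_sum]
    rw [show ∑ i, eps lb (Y k i) * q i = 0 from hq0 k, mul_zero])
  apply ha
  have e : ∑ i, ∑ j, rE lb J (p i) * N i j * rE lb J (q j)
    = ∑ k, (∑ i, rE lb J (p i) * X i k) * (∑ j, Y k j * rE lb J (q j)) := by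
    simp only [hNij, Finset.sum_mul, Finset.mul_sum, mul_assoc]
    rw [Finset.sum_comm]
    conv_rhs => rw [Finset.sum_comm]
    refine Finset.sum_congr rfl fun j _ => Finset.sum_comm
  have e2 : ∑ i, ∑ j, ev lb (rE lb J (p i) * N i j * rE lb J (q j)) [a] =
      ev lb (∑ i, ∑ j, rE lb J (p i) * N i j * rE lb J (q j)) [a] := by
    simp only [map_sum, Finsupp.finsetSum_apply]
  rw [e2, e, map_sum, Finsupp.finsetSum_apply]
  refine Finset.sum_eq_zero fun k _ => ?_
  by_contra hne
  obtain ⟨s1, s2, h1, h2, h3⟩ := mul_len lb _ _ _ hne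
  have n1 : s1 ≠ [] := by
    rintro rfl
    apply h1
    rw [← eps_eq, map_sum, ← hp0 k]
    refine Finset.sum_congr rfl fun i _ => ?_
    rw [map_mul, eps, TT_E]; rfl
  have n2 : s2 ≠ [] := by
    rintro rfl
    apply h2
    rw [← eps_eq, map_sum, ← hq0 k]
    refine Finset.sum_congr rfl fun i _ => ?_
    rw [map_mul, eps, TT_E]; rfl
  have := List.length_pos_of_ne_nil n1
  have := List.length_pos_of_ne_nil n2
  simp at h3
  omega

end

/-- left independence of a family over `G` via `ι` -/
def LI {G E : Type} [DivisionRing G] [DivisionRing E] (ι : G →+* E) {κ : Type} [Fintype κ]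
    (y : κ → E) : Prop := ∀ g : κ → G, ∑ k, ι (g k) * y k = 0 → g = 0

theorem LI.dual {G E : Type} [DivisionRing G] [DivisionRing E] {ι : G →+* E} {κ : Type} [Fintype κ]
    {y : κ → E} (hy : LI ι y) : ∃ χ : κ → E →+ G, (∀ k g f, χ k (ι g * f) = g * χ k f) ∧
      ∀ k l, χ k (y l) = if k = l then 1 else 0 := by
  letI : Module G E := Module.compHom E ι
  have hs : ∀ (g : G) (f : E), g • f = ι g * f := fun _ _ => rfl
  let f : (κ → G) →ₗ[G] E := Fintype.linearCombination G y
  have hf : LinearMap.ker f = ⊥ := by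
    rw [LinearMap.ker_eq_bot']
    intro g hg
    apply hy
    rw [← hg, Fintype.linearCombination_apply]; rfl
  obtain ⟨h, hh⟩ := LinearMap.exists_leftInverse_of_injective f hf
  refine ⟨fun k => ((LinearMap.proj k).comp h).toAddMonoidHom, ?_, ?_⟩
  · intro k g f
    show h (ι g * f) k = g * h f k
    rw [← hs, map_smul]; rfl
  · intro k l
    show h (y l) k = _
    have : y l = f (Pi.single l 1) := by
      simp [f]
    rw [this, show h (f (Pi.single l 1)) = Pi.single l 1 from DFunLike.congr_fun hh _]
    rw [Pi.single_apply]

theorem LB.functional {G E : Type} [DivisionRing G] [DivisionRing E] {ι : G →+* E} (lb : LB ι)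
    (χ : E →+ G) (hχ : ∀ g f, χ (ι g * f) = g * χ f) (f : E) :
    χ f = (lb.c f).sum (fun β g => g * χ (lb.e β)) := by
  conv_lhs => rw [← lb.recon f]
  rw [Finsupp.sum, map_sum]
  exact Finset.sum_congr rfl fun β _ => hχ _ _

/-- if all coordinates vanish, then all functionals vanish -/
theorem LB.functional_sum {G E : Type} [DivisionRing G] [DivisionRing E] {ι : G →+* E} (lb : LB ι)
    {S : Type} [Ring S] (θ : G →+* S)
    {κ : Type} [Fintype κ] (p : κ → S) (y : κ → E) (h : ∀ γ, ∑ i, p i * θ (lb.c (y i) γ) = 0)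
    (χ : E →+ G) (hχ : ∀ g f, χ (ι g * f) = g * χ f) : ∑ i, p i * θ (χ (y i)) = 0 := by
  let T : Finset lb.B := Finset.univ.biUnion (fun i => (lb.c (y i)).support)
  have e : ∀ i, χ (y i) = ∑ β ∈ T, lb.c (y i) β * χ (lb.e β) := by
    intro i
    rw [lb.functional χ hχ]
    refine Finsupp.sum_of_support_subset _ ?_ _ (by simp)
    exact Finset.subset_biUnion_of_mem (fun i => (lb.c (y i)).support) (Finset.mem_univ i)
  simp only [e, map_sum, map_mul, Finset.mul_sum]
  rw [Finset.sum_comm]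
  refine Finset.sum_eq_zero fun β _ => ?_
  simp only [← mul_assoc, ← Finset.sum_mul]
  rw [h, zero_mul]

theorem LI.coord {G E : Type} [DivisionRing G] [DivisionRing E] {ι : G →+* E} (lb : LB ι)
    {κ : Type} [Fintype κ] {y : κ → E} (hy : LI ι y) (p : κ → E)
    (h : ∀ γ, ∑ i, p i * ι (lb.c (y i) γ) = 0) : p = 0 := by
  obtain ⟨χ, h1, h2⟩ := hy.dual
  funext k
  have := lb.functional_sum ι p y h (χ k) (h1 k)
  simpa [h2] using this

theorem LI.mul_right {G E : Type} [DivisionRing G] [DivisionRing E] {ι : G →+* E}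
    {κ : Type} [Fintype κ] {y : κ → E} (hy : LI ι y) {q : E} (hq : q ≠ 0) : LI ι (fun k => y k * q) := by
  intro g hg
  apply hy
  simp only [← mul_assoc, ← Finset.sum_mul] at hg
  exact (mul_eq_zero.1 hg).resolve_right hq

end FT


namespace FT
open Matrix
open scoped Classical

structure St (m : ℕ) where
  F : Type
  G : Type
  [dF : DivisionRing F]
  [dG : DivisionRing G]
  i : G →+* F
  x : Fin (m + 2) → F
  x0 : x 0 = 1
  li : LI i x

attribute [instance] St.dF St.dG

structure Hm {m : ℕ} (A B : St m) where
  a : A.F →+* B.F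
  b : A.G →+* B.G
  comm : ∀ g, a (A.i g) = B.i (b g)
  ax : ∀ k, a (A.x k) = B.x k

noncomputable def conjHom {F Q : Type} [Ring F] [DivisionRing Q] (θ : F →+* Q) (w : Q) (hw : w ≠ 0) :
    F →+* Q where
  toFun f := w * θ f * w⁻¹
  map_one' := by simp [hw]
  map_zero' := by simp
  map_add' := by intros; simp [mul_add, add_mul]
  map_mul' a b := by
    rw [map_mul]
    simp only [mul_assoc]
    rw [inv_mul_cancel_left₀ hw]

section
variable {G E : Type} [DivisionRing G] [DivisionRing E] {ι : G →+* E} (lb : LB ι) {J : Type}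

theorem nontriv_RR : Nontrivial (RR lb J) := (eps lb).domain_nontrivial

theorem exists_aut (u u' : J → RR lb J)
    (hu : ∀ l g, u l * rE lb J (ι g) = rE lb J (ι g) * u l)
    (hu' : ∀ l g, u' l * rE lb J (ι g) = rE lb J (ι g) * u' l)
    (h1 : ∀ l, TT lb (rE lb J) u hu (u' l) = rV lb l)
    (h2 : ∀ l, TT lb (rE lb J) u' hu' (u l) = rV lb l) :
    ∃ τ : RR lb J ≃+* RR lb J, (∀ f, τ (rE lb J f) = rE lb J f) ∧ ∀ l, τ (rV lb l) = u l := by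
  refine ⟨RingEquiv.ofRingHom (TT lb (rE lb J) u hu) (TT lb (rE lb J) u' hu') ?_ ?_, ?_, ?_⟩
  · apply RR_hom_ext
    · intro x; simp [TT_E]
    · intro x; simp [TT_V, h1]
  · apply RR_hom_ext
    · intro x; simp [TT_E]
    · intro x; simp [TT_V, h2]
  · intro f; simp [TT_E]
  · intro f; simp [TT_V]

theorem exists_perm_aut (π : Equiv.Perm J) :
    ∃ τ : RR lb J ≃+* RR lb J, (∀ f, τ (rE lb J f) = rE lb J f) ∧ ∀ l, τ (rV lb l) = rV lb (π l) := by
  refine exists_aut lb (fun l => rV lb (π l)) (fun l => rV lb (π.symm l))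
    (fun l g => rV_comm lb _ g) (fun l g => rV_comm lb _ g) ?_ ?_
  · intro l; rw [TT_V]; simp
  · intro l; rw [TT_V]; simp
end

theorem step1_full {m : ℕ} (A : St m) (lb : LB A.i) :
    Full (Matrix.of fun i j : Fin (m + 2) => rV lb j * rE lb (Fin (m + 2)) (A.x i)) := by
  apply full_crit
  intro p q hp hq _ _
  by_contra hcon
  push Not at hcon
  obtain ⟨j, hj⟩ := Function.ne_iff.1 hq
  apply hp
  refine (A.li.mul_right hj).coord lb p fun γ => ?_
  rw [← hcon (j, γ)]
  refine Finset.sum_congr rfl fun i _ => ?_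
  have : ∀ j', rE lb (Fin (m+2)) (p i) * (Matrix.of fun i j : Fin (m + 2) => rV lb j * rE lb (Fin (m + 2)) (A.x i)) i j'
    * rE lb (Fin (m+2)) (q j') = rE lb (Fin (m+2)) (p i) * rV lb j' * rE lb (Fin (m+2)) (A.x i * q j') := by
    intro j'
    rw [map_mul, Matrix.of_apply]
    simp only [mul_assoc]
  refine Eq.trans ?_ (Finset.sum_congr rfl fun j' _ =>
    ((congrArg (fun r => ev lb r [(j, γ)]) (this j')).trans (ev_lin lb _ _ _ _ _)).symm)
  symm
  refine (Finset.sum_eq_single j ?_ ?_).trans (if_pos rfl)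
  · intro b _ hb; exact if_neg hb
  · intro h; exact absurd (Finset.mem_univ _) h

theorem step1 {m : ℕ} (A : St m) : ∃ (B : St m) (h : Hm A B),
    ∀ f, ∃ γ : Fin (m + 2) → B.G, h.a f = ∑ k, B.i (γ k) * B.x k := by
  obtain ⟨lb⟩ := exists_LB A.i
  haveI : Nontrivial (RR lb (Fin (m + 2))) := nontriv_RR lb
  obtain ⟨Q, dQ, θ, hfull, haut⟩ := exists_Q (triv_RR lb (J := Fin (m + 2)))
  obtain ⟨D, hD1, hD2⟩ := hfull _ _ (step1_full A lb)
  let w : Fin (m + 2) → Q := fun j => θ (rV lb j)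
  let e : A.F →+* Q := θ.comp (rE lb (Fin (m + 2)))
  have hB : ∀ i j, (Matrix.of fun i j : Fin (m + 2) => rV lb j * rE lb (Fin (m + 2)) (A.x i)).map θ i j
      = w j * e (A.x i) := by
    intro i j; simp [w, e]
  have hT : ∀ π : Equiv.Perm (Fin (m + 2)), ∃ τ : Q →+* Q, (∀ f, τ (e f) = e f) ∧ ∀ j, τ (w j) = w (π j) := by
    intro π
    obtain ⟨τ, h1, h2⟩ := exists_perm_aut lb π
    obtain ⟨τ', h3⟩ := haut τ
    exact ⟨τ', fun f => by simp only [e, RingHom.comp_apply, h3, h1], fun j => by simp only [w, h3, h2]⟩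
  choose τ hτe hτw using hT
  have huniq : ∀ γ γ' : Fin (m + 2) → Q, (∀ j, ∑ i, γ i * (w j * e (A.x i)) = ∑ i, γ' i * (w j * e (A.x i)))
      → γ = γ' := by
    intro γ γ' h
    have : γ ᵥ* ((Matrix.of fun i j : Fin (m + 2) => rV lb j * rE lb (Fin (m + 2)) (A.x i)).map θ) =
        γ' ᵥ* ((Matrix.of fun i j : Fin (m + 2) => rV lb j * rE lb (Fin (m + 2)) (A.x i)).map θ) := by
      funext j
      simp only [Matrix.vecMul, dotProduct, hB]
      exact h j
    have := congrArg (fun v => v ᵥ* D) this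
    simpa only [Matrix.vecMul_vecMul, hD1, Matrix.vecMul_one] using this
  have hw : w 0 ≠ 0 := by
    intro h0
    have := congrFun (congrFun hD2 0) 0
    rw [Matrix.mul_apply] at this
    simp only [hB, h0] at this
    simp at this
  let G' : Subfield Q := ⨅ π, RingHom.eqLocusField (τ π) (RingHom.id Q)
  have hG' : ∀ q, q ∈ G' ↔ ∀ π, τ π q = q := by
    intro q
    simp only [G', Subfield.mem_iInf]
    exact Iff.rfl
  let a : A.F →+* Q := conjHom e (w 0) hw
  have ha : ∀ f, a f = w 0 * e f * (w 0)⁻¹ := fun _ => rfl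
  let b : A.G →+* G' := (e.comp A.i).codRestrict G' (fun g => (hG' _).2 fun π => hτe π _)
  have hb : ∀ g, (b g : Q) = e (A.i g) := fun _ => rfl
  have hcomm : ∀ g j, w j * e (A.i g) = e (A.i g) * w j := by
    intro g j
    simp only [w, e, RingHom.comp_apply, ← map_mul, rV_comm]
  let B : St m :=
    { F := Q, G := G', i := G'.subtype, x := fun k => a (A.x k), x0 := by rw [A.x0, map_one]
      li := by
        intro g hg
        have h1 : ∑ k, (g k : Q) * (w 0 * e (A.x k)) = 0 := by
          have h2 : (∑ k, (g k : Q) * (w 0 * e (A.x k))) * (w 0)⁻¹ = 0 := by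
            rw [Finset.sum_mul, ← hg]
            refine Finset.sum_congr rfl fun k _ => ?_
            show _ = (g k : Q) * a (A.x k)
            rw [ha]; simp only [mul_assoc]
          exact (mul_eq_zero.1 h2).resolve_right (inv_ne_zero hw)
        have h3 : (fun k => (g k : Q)) = fun _ => 0 := by
          apply huniq
          intro j
          have := congrArg (τ (Equiv.swap 0 j)) h1
          simp only [map_sum, map_mul, map_zero, hτe, hτw, Equiv.swap_apply_left] at this
          simp only [zero_mul, Finset.sum_const_zero]
          rw [← this]
          refine Finset.sum_congr rfl fun k _ => ?_
          rw [(hG' _).1 (g k).2]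
        funext k
        exact Subtype.ext (congrFun h3 k) }
  let h : Hm A B :=
    { a := a, b := b
      comm := fun g => by
        show a (A.i g) = (b g : Q)
        rw [ha, hcomm, hb, mul_assoc, mul_inv_cancel₀ hw, mul_one]
      ax := fun k => rfl }
  refine ⟨B, h, ?_⟩
  intro f
  let γ : Fin (m + 2) → Q := (fun j => w j * e f) ᵥ* D
  have hγ : ∀ j, ∑ i, γ i * (w j * e (A.x i)) = w j * e f := by
    intro j
    have : γ ᵥ* ((Matrix.of fun i j : Fin (m + 2) => rV lb j * rE lb (Fin (m + 2)) (A.x i)).map θ) = 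
        (fun j => w j * e f) := by
      simp only [γ, Matrix.vecMul_vecMul, hD2, Matrix.vecMul_one]
    have := congrFun this j
    simpa only [Matrix.vecMul, dotProduct, hB] using this
  have hfix : ∀ k, γ k ∈ G' := by
    intro k
    rw [hG']
    intro π
    have : (fun k => τ π (γ k)) = γ := by
      apply huniq
      intro j
      rw [hγ]
      have := congrArg (τ π) (hγ (π.symm j))
      simpa only [map_sum, map_mul, hτe, hτw, Equiv.apply_symm_apply] using this
    exact congrFun this k
  refine ⟨fun k => ⟨γ k, hfix k⟩, ?_⟩
  show a f = ∑ k, γ k * a (A.x k)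
  rw [ha, ← hγ 0, Finset.sum_mul]
  refine Finset.sum_congr rfl fun k _ => ?_
  rw [ha]; simp only [mul_assoc]

end FT


namespace FT
open Matrix
open scoped Classical

section
variable {F E : Type} [DivisionRing F] [DivisionRing E] (L : Laur F E)

theorem Laur.cf_pow (j : ℕ) (k : ℤ) (x : E) : L.cf k (x * L.c ^ j) = L.cf (k - j) x := by
  induction j generalizing k with
  | zero => simp
  | succ j ih =>
    rw [pow_succ, ← mul_assoc, L.cf_c, ih]
    congr 1
    push_cast; ring_nf

noncomputable def Laur.cc {m : ℕ} (j : Fin (m + 2)) : E := if j = 0 then 0 else L.c ^ (j : ℕ)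

theorem Laur.cc_comm {m : ℕ} (j : Fin (m + 2)) (f : F) : L.cc j * L.C f = L.C f * L.cc j := by
  unfold Laur.cc
  split_ifs
  · simp
  · exact (Commute.pow_left (L.c_comm f) _ : _)
end

section
variable {m : ℕ} (A : St m) {E : Type} [DivisionRing E] (L : Laur A.F E) (lb : LB (L.C.comp A.i))

theorem right_indep (g0 g1 : A.G) (h : A.i g0 + A.x 1 * A.i g1 = 0) : g0 = 0 ∧ g1 = 0 := by
  have h1 : g1 = 0 := by
    by_contra hg
    have e : A.x 1 = - A.i (g0 * g1⁻¹) := by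
      rw [map_mul, map_inv₀, ← neg_mul, eq_mul_inv_iff_mul_eq₀ (by simpa using hg)]
      exact eq_neg_of_add_eq_zero_right h
    have := A.li (fun k => if k = 0 then g0 * g1⁻¹ else if k = 1 then 1 else 0) (by
      rw [Fin.sum_univ_succ, Fin.sum_univ_succ]
      rw [Finset.sum_eq_zero]
      · simp [A.x0, e]
      · intro k _
        have h1 : (k.succ.succ : Fin (m + 2)) ≠ 0 := Fin.succ_ne_zero _
        have h2 : (k.succ.succ : Fin (m + 2)) ≠ 1 := by
          rw [← Fin.succ_zero_eq_one]
          intro h; exact Fin.succ_ne_zero _ (Fin.succ_injective _ h)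
        simp [h1, h2])
    have := congrFun this 1
    simp at this
  subst h1
  simpa using h

theorem full_S : Full (Matrix.of fun a b : Fin 2 =>
    rE lb (Fin 2) (if b = 0 then 1 else L.C (A.x 1)) * rV lb a) := by
  apply full_crit
  intro p q hp hq _ _
  by_contra hcon
  push Not at hcon
  obtain ⟨a, ha⟩ := Function.ne_iff.1 hp
  have key : ∀ γ, lb.c (q 0) γ = 0 ∧ lb.c (q 1) γ = 0 := by
    intro γ
    have h := hcon (a, γ)
    rw [Finset.sum_eq_single a] at h
    · have e : ∀ b, ev lb (rE lb (Fin 2) (p a) * (Matrix.of fun a b : Fin 2 =>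
          rE lb (Fin 2) (if b = 0 then 1 else L.C (A.x 1)) * rV lb a) a b * rE lb (Fin 2) (q b)) [(a, γ)]
          = p a * (if b = 0 then 1 else L.C (A.x 1)) * L.C (A.i (lb.c (q b) γ)) := by
        intro b
        rw [Matrix.of_apply, ← mul_assoc, ← map_mul, ev_lin, if_pos rfl]
        rfl
      rw [Finset.sum_congr rfl fun b _ => e b, Fin.sum_univ_two] at h
      simp only [if_true, one_ne_zero, if_false, mul_one, mul_assoc, ← mul_add] at h
      have h2 := (mul_eq_zero.1 h).resolve_left ha
      rw [← map_mul, ← map_add, map_eq_zero] at h2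
      exact right_indep A _ _ h2
    · intro a' _ ha'
      refine Finset.sum_eq_zero fun b _ => ?_
      rw [Matrix.of_apply, ← mul_assoc, ← map_mul, ev_lin, if_neg ha']
    · intro h; exact absurd (Finset.mem_univ _) h
  apply hq
  funext b
  have : lb.c (q b) = 0 := by
    refine Finsupp.ext fun γ => ?_
    fin_cases b
    · exact (key γ).1
    · exact (key γ).2
  rw [← lb.recon (q b), this]; simp

noncomputable def aff (a b c : E) : RR lb (Fin 2) :=
  rE lb _ a + rE lb _ b * rV lb 0 + rE lb _ c * rV lb 1

theorem eps_aff (a b c : E) : eps lb (aff A L lb a b c) = a := by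
  unfold aff eps
  simp only [map_add, map_mul, TT_E, TT_V]
  simp

theorem ev_aff (a b c p q : E) (γ) : ev lb (rE lb _ p * aff A L lb a b c * rE lb _ q) [(1, γ)]
    = p * c * L.C (A.i (lb.c q γ)) := by
  have e : rE lb _ p * aff A L lb a b c * rE lb _ q = rE lb _ (p * a * q)
    + rE lb _ (p * b) * rV lb 0 * rE lb _ q + rE lb _ (p * c) * rV lb 1 * rE lb _ q := by
    unfold aff
    simp only [map_mul]
    noncomm_ring
  rw [e, map_add, map_add, Finsupp.add_apply, Finsupp.add_apply, ev_rE, ev_lin, ev_lin]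
  simp

theorem hu_shift (l : Fin 2) (g : A.G) :
    (if l = 0 then 1 + rV lb (0 : Fin 2) else rV lb (1 : Fin 2)) * rE lb (Fin 2) ((L.C.comp A.i) g) =
    rE lb (Fin 2) ((L.C.comp A.i) g) * (if l = 0 then 1 + rV lb (0 : Fin 2) else rV lb (1 : Fin 2)) := by
  split_ifs
  · rw [add_mul, mul_add, rV_comm, one_mul, mul_one]
  · rw [rV_comm]

noncomputable def shiftHom : RR lb (Fin 2) →+* RR lb (Fin 2) :=
  TT lb (rE lb _) (fun l => if l = 0 then 1 + rV lb 0 else rV lb 1) (hu_shift A L lb)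

theorem shift_aff (a b c : E) : shiftHom A L lb (aff A L lb a b c) = aff A L lb (a + b) b c := by
  unfold shiftHom aff
  simp only [map_add, map_mul, TT_E, TT_V]
  simp
  noncomm_ring

noncomputable def NA (r c : Fin (m + 2) × Fin (m + 2)) : E :=
  if c.2 = 0 then (if r.2 = c.1 then L.C (A.x r.1) else 0) else 0
noncomputable def NB (r c : Fin (m + 2) × Fin (m + 2)) : E :=
  if r.1 = c.1 then (if r.2 = c.2 then 1 else 0) - (if r.2 = 0 then 1 else 0) else 0
noncomputable def NC (r c : Fin (m + 2) × Fin (m + 2)) : E :=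
  if r = c then L.cc c.2 else 0

noncomputable def Nmat : Matrix (Fin (m + 2) × Fin (m + 2)) (Fin (m + 2) × Fin (m + 2)) (RR lb (Fin 2)) :=
  Matrix.of fun r c => aff A L lb (NA A L r c) (NB r c) (NC A L r c)

/-- the numerical heart of step 2 -/
theorem heart (P r : Fin (m + 2) → E) (q : Fin (m + 2) × Fin (m + 2) → E)
    (hq : ∀ i j, j ≠ 0 → q (i, j) = - (L.C (A.x i) * r j))
    (h : ∀ γ, ∑ a : Fin (m + 2) × Fin (m + 2), P a.1 * L.cc a.2 * L.C (A.i (lb.c (q a) γ)) = 0)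
    (hP : P ≠ 0) : ∀ j, j ≠ 0 → r j = 0 := by
  by_contra hr
  push Not at hr
  obtain ⟨j1, hj1, hrj1⟩ := hr
  obtain ⟨b, hb⟩ : ∃ b, L.cf b (r j1) ≠ 0 := by
    by_contra hc
    push Not at hc
    exact hrj1 (L.ext0 _ hc)
  -- smallest j0
  obtain ⟨j0, ⟨hj0, hrj0⟩, hmin⟩ : ∃ j0, (j0 ≠ 0 ∧ L.cf b (r j0) ≠ 0) ∧
      ∀ j < j0, ¬ (j ≠ 0 ∧ L.cf b (r j) ≠ 0) := by
    let S : Finset (Fin (m + 2)) := Finset.univ.filter fun j => j ≠ 0 ∧ L.cf b (r j) ≠ 0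
    have hS : S.Nonempty := ⟨j1, by simp [S, hj1, hb]⟩
    refine ⟨S.min' hS, by simpa [S] using S.min'_mem hS, fun j hj hh => ?_⟩
    exact absurd (S.min'_le j (by simpa [S] using hh)) (not_le.2 hj)
  -- smallest exponent
  obtain ⟨a0, ⟨i0, hi0⟩, ha0⟩ : ∃ a0 : ℤ, (∃ i, L.cf a0 (P i) ≠ 0) ∧ ∀ a, (∃ i, L.cf a (P i) ≠ 0) → a0 ≤ a := by
    apply Int.exists_least_of_bdd
    · choose k hk using fun i => L.bdd (P i)
      refine ⟨Finset.univ.inf' Finset.univ_nonempty k, ?_⟩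
      rintro z ⟨i, hi⟩
      refine le_trans (Finset.inf'_le k (Finset.mem_univ i)) ?_
      by_contra hlt
      exact hi (hk i z (not_le.1 hlt))
    · obtain ⟨i, hi⟩ := Function.ne_iff.1 hP
      by_contra hc
      push Not at hc
      exact hi (L.ext0 _ fun k => hc k i)
  have hli : LI A.i (fun i => A.x i * L.cf b (r j0)) := A.li.mul_right hrj0
  obtain ⟨χ, hχ1, hχ2⟩ := hli.dual
  have h1 := lb.functional_sum (L.C.comp A.i) (fun a => P a.1 * L.cc a.2) q h ((χ i0).comp (L.cf b))
    (by intro g f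
        simp only [AddMonoidHom.comp_apply, RingHom.comp_apply, L.cf_left, hχ1])
  have hterm : ∀ k i j, j ≠ 0 → L.cf k (P i * L.cc j * (L.C.comp A.i) (((χ i0).comp (L.cf b)) (q (i, j))))
      = L.cf (k - (j : ℕ)) (P i) * - A.i (χ i0 (A.x i * L.cf b (r j))) := by
    intro k i j hj
    rw [RingHom.comp_apply, L.cf_right, Laur.cc, if_neg hj, L.cf_pow, AddMonoidHom.comp_apply,
      hq _ _ hj, map_neg, L.cf_left, map_neg, map_neg]
  have h2 := congrArg (L.cf (a0 + (j0 : ℕ))) h1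
  rw [map_sum, map_zero] at h2
  rw [Fintype.sum_prod_type_right, Finset.sum_eq_single j0] at h2
  · rw [Finset.sum_congr rfl fun i _ => hterm _ i j0 hj0] at h2
    simp only [hχ2, add_sub_cancel_right] at h2
    apply hi0
    simpa using h2
  · intro j _ hj
    refine Finset.sum_eq_zero fun i _ => ?_
    by_cases hj' : j = 0
    · simp [Laur.cc, hj']
    rw [hterm _ i j hj']
    rcases lt_or_gt_of_ne hj with hlt | hlt
    · have : L.cf b (r j) = 0 := by
        by_contra hne
        exact hmin j hlt ⟨hj', hne⟩
      rw [this]; simp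
    · have : L.cf (a0 + (j0 : ℕ) - (j : ℕ)) (P i) = 0 := by
        by_contra hne
        have h3 := ha0 _ ⟨i, hne⟩
        have : (j0 : ℕ) < (j : ℕ) := hlt
        omega
      rw [this, zero_mul]
  · intro h; exact absurd (Finset.mem_univ _) h

theorem full_N : Full (Nmat A L lb) := by
  apply Full.map_of (shiftHom A L lb)
  have hN : ∀ r c, (Nmat A L lb).map (shiftHom A L lb) r c =
      aff A L lb (NA A L r c + NB r c) (NB r c) (NC A L r c) := by
    intro r c
    rw [Matrix.map_apply]
    exact shift_aff A L lb _ _ _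
  apply full_crit
  intro p q hp hq hpe hqe
  simp only [hN, eps_aff] at hpe hqe
  by_contra hcon
  push Not at hcon
  have hp1 : ∀ i j, p (i, j) = p (i, 0) := by
    intro i j
    by_cases hj : j = 0
    · rw [hj]
    have := hpe (i, j)
    rw [Fintype.sum_prod_type, Finset.sum_eq_single i] at this
    · simp only [NA, NB, if_neg hj, if_true, zero_add, mul_sub, Finset.sum_sub_distrib, mul_ite, mul_one,
        mul_zero] at this
      simpa [sub_eq_zero] using this
    · intro i' _ hi'
      simp [NA, NB, hj, hi']
    · intro h; exact absurd (Finset.mem_univ _) h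
  have hP : (fun i => p (i, 0)) ≠ 0 := by
    intro h
    apply hp
    funext ⟨i, j⟩
    rw [hp1]; exact congrFun h i
  have hsumB : ∀ i j, ∑ c : Fin (m + 2) × Fin (m + 2), NB (i, j) c * q c
      = q (i, j) - (if j = 0 then ∑ j', q (i, j') else 0) := by
    intro i j
    rw [Fintype.sum_prod_type, Finset.sum_eq_single i]
    · simp only [NB, if_true, sub_mul, Finset.sum_sub_distrib, ite_mul, one_mul, zero_mul]
      congr 1
      · simp
      · split_ifs <;> simp
    · intro i' _ hi'
      simp [NB, Ne.symm hi']
    · intro h; exact absurd (Finset.mem_univ _) h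
  have hsumA : ∀ i j, ∑ c : Fin (m + 2) × Fin (m + 2), NA A L (i, j) c * q c
      = L.C (A.x i) * q (j, 0) := by
    intro i j
    rw [Fintype.sum_prod_type, Finset.sum_eq_single j]
    · simp [NA]
    · intro i' _ hi'
      simp [NA, Ne.symm hi']
    · intro h; exact absurd (Finset.mem_univ _) h
  have hq0 : ∀ i j, L.C (A.x i) * q (j, 0) + (q (i, j) - (if j = 0 then ∑ j', q (i, j') else 0)) = 0 := by
    intro i j
    rw [← hsumA, ← hsumB, ← Finset.sum_add_distrib, ← hqe (i, j)]
    exact Finset.sum_congr rfl fun c _ => (add_mul _ _ _).symm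
  have hq1 : ∀ i j, j ≠ 0 → q (i, j) = - (L.C (A.x i) * q (j, 0)) := by
    intro i j hj
    have := hq0 i j
    rw [if_neg hj, sub_zero] at this
    exact eq_neg_of_add_eq_zero_right this
  have hr := heart A L lb (fun i => p (i, 0)) (fun j => q (j, 0)) q hq1 (by
    intro γ
    rw [← hcon (1, γ)]
    refine Finset.sum_congr rfl fun a _ => ?_
    symm
    refine (Finset.sum_congr rfl fun c _ =>
      (congrArg (fun r => ev lb (rE lb (Fin 2) (p a) * r * rE lb (Fin 2) (q c)) [(1, γ)]) (hN a c)).trans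
      (ev_aff A L lb _ _ _ _ _ γ)).trans ?_
    refine (Finset.sum_eq_single a ?_ ?_).trans ?_
    · intro c _ hc
      simp [NC, Ne.symm hc]
    · intro h; exact absurd (Finset.mem_univ _) h
    · simp only [NC, if_true]
      rw [← hp1 a.1 a.2]) hP
  apply hq
  have h3 : ∀ i j, j ≠ 0 → q (i, j) = 0 := by
    intro i j hj
    rw [hq1 i j hj, show q (j, 0) = 0 from hr j hj]; simp
  have h4 : q (0, 0) = 0 := by
    have := hq0 0 0
    rw [if_pos rfl, Finset.sum_eq_single 0] at this
    · simpa [A.x0] using this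
    · intro j _ hj; exact h3 0 j hj
    · intro h; exact absurd (Finset.mem_univ _) h
  funext ⟨i, j⟩
  by_cases hj : j = 0
  · subst hj
    by_cases hi : i = 0
    · rw [hi]; exact h4
    · exact hr i hi
  · exact h3 i j hj

theorem exists_shear (c : E) (hc : ∀ f, c * L.C f = L.C f * c) :
    ∃ τ : RR lb (Fin 2) ≃+* RR lb (Fin 2), (∀ f, τ (rE lb _ f) = rE lb _ f) ∧
      τ (rV lb 0) = rV lb 0 + rE lb _ c * rV lb 1 ∧ τ (rV lb 1) = rV lb 1 := by
  have hcomm : ∀ d : E, (∀ f, d * L.C f = L.C f * d) → ∀ (l : Fin 2) (g : A.G),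
      (if l = 0 then rV lb (0 : Fin 2) + rE lb (Fin 2) d * rV lb 1 else rV lb (1 : Fin 2)) * rE lb (Fin 2) ((L.C.comp A.i) g) =
      rE lb (Fin 2) ((L.C.comp A.i) g) * (if l = 0 then rV lb (0 : Fin 2) + rE lb (Fin 2) d * rV lb 1 else rV lb (1 : Fin 2)) := by
    intro d hd l g
    split_ifs
    · rw [add_mul, mul_add, rV_comm, mul_assoc, rV_comm, ← mul_assoc, ← mul_assoc, ← map_mul, ← map_mul,
        RingHom.comp_apply, hd]
    · rw [rV_comm]
  have hc' : ∀ f, (-c) * L.C f = L.C f * (-c) := by intro f; rw [neg_mul, mul_neg, hc]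
  obtain ⟨τ, h1, h2⟩ := exists_aut lb (J := Fin 2) _ _ (hcomm c hc) (hcomm (-c) hc') (by
    intro l
    fin_cases l
    · simp [TT_E, TT_V]
    · simp [TT_V]) (by
    intro l
    fin_cases l
    · simp [TT_E, TT_V]
    · simp [TT_V])
  exact ⟨τ, h1, by simpa using h2 0, by simpa using h2 1⟩

end
end FT


namespace FT
open Matrix
open scoped Classical

theorem step2 {m : ℕ} (A : St m) : ∃ (B : St m) (h : Hm A B),
    ∀ f, ∃ s t : B.G, h.a f = B.i s + B.x 1 * B.i t := by
  obtain ⟨E, dE, ⟨L⟩⟩ := exists_laur A.F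
  obtain ⟨lb⟩ := exists_LB (L.C.comp A.i)
  have : Nontrivial (RR lb (Fin 2)) := nontriv_RR lb
  obtain ⟨Q, dQ, θ, hfull, haut⟩ := exists_Q (triv_RR lb (J := Fin 2))
  obtain ⟨D, hD1, hD2⟩ := hfull _ _ (full_S A L lb)
  obtain ⟨M, hM1, hM2⟩ := hfull _ _ (full_N A L lb)
  let v : Fin 2 → Q := fun j => θ (rV lb j)
  let E' : E →+* Q := θ.comp (rE lb (Fin 2))
  let e : A.F →+* Q := E'.comp L.C
  have hE' : ∀ x, E' x = θ (rE lb (Fin 2) x) := fun _ => rfl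
  have he : ∀ x, e x = E' (L.C x) := fun _ => rfl
  have hv : ∀ j, v j = θ (rV lb j) := fun _ => rfl
  let z : Fin (m + 2) → Q := fun j => v 0 + E' (L.cc j) * v 1
  have hz : ∀ j, z j = v 0 + E' (L.cc j) * v 1 := fun _ => rfl
  have hT : ∀ j : Fin (m + 2), ∃ τ : Q →+* Q, (∀ f, τ (E' f) = E' f) ∧ τ (v 0) = z j ∧ τ (v 1) = v 1 := by
    intro j
    obtain ⟨τ, h1, h2, h3⟩ := exists_shear A L lb (L.cc j) (L.cc_comm j)
    obtain ⟨τ', h4⟩ := haut τ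
    refine ⟨τ', fun f => ?_, ?_, ?_⟩
    · rw [hE', h4, h1]
    · rw [hv, h4, h2, map_add, map_mul]; rfl
    · rw [hv, h4, h3]
  choose τ hτE hτ0 hτ1 using hT
  have hτe : ∀ j f, τ j (e f) = e f := fun j f => hτE j _
  have hS : ∀ a b, (Matrix.of fun a b : Fin 2 =>
    rE lb (Fin 2) (if b = 0 then 1 else L.C (A.x 1)) * rV lb a).map θ a b
      = (if b = 0 then 1 else e (A.x 1)) * v a := by
    intro a b
    rw [Matrix.map_apply, Matrix.of_apply, map_mul]
    split_ifs
    · simp [hv]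
    · rfl
  have hSmul : ∀ (y : Fin 2 → Q) a, ((Matrix.of fun a b : Fin 2 =>
    rE lb (Fin 2) (if b = 0 then 1 else L.C (A.x 1)) * rV lb a).map θ *ᵥ y) a
      = v a * y 0 + e (A.x 1) * v a * y 1 := by
    intro y a
    simp only [Matrix.mulVec, dotProduct, hS]
    rw [Fin.sum_univ_two, if_pos rfl, one_mul, if_neg (by decide)]
  have huniq : ∀ y y' : Fin 2 → Q, (∀ a, v a * y 0 + e (A.x 1) * v a * y 1 =
      v a * y' 0 + e (A.x 1) * v a * y' 1) → y = y' := by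
    intro y y' h
    have : (Matrix.of fun a b : Fin 2 =>
        rE lb (Fin 2) (if b = 0 then 1 else L.C (A.x 1)) * rV lb a).map θ *ᵥ y =
        (Matrix.of fun a b : Fin 2 =>
        rE lb (Fin 2) (if b = 0 then 1 else L.C (A.x 1)) * rV lb a).map θ *ᵥ y' := by
      funext a
      rw [hSmul, hSmul]; exact h a
    have := congrArg (fun v => D *ᵥ v) this
    simpa only [Matrix.mulVec_mulVec, hD2, Matrix.one_mulVec] using this
  have hw : v 0 ≠ 0 := by
    intro h0
    have := congrFun (congrFun hD1 0) 0
    rw [Matrix.mul_apply] at this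
    simp only [hS, h0] at this
    simp at this
  have hz0 : ∀ j, z j ≠ 0 := by
    intro j
    rw [← hτ0 j]
    exact (map_ne_zero _).2 hw
  let G' : Subfield Q := ⨅ j, RingHom.eqLocusField (τ j) (RingHom.id Q)
  have hG' : ∀ q, q ∈ G' ↔ ∀ j, τ j q = q := by
    intro q
    simp only [G', Subfield.mem_iInf]
    exact Iff.rfl
  let a : A.F →+* Q := conjHom e (v 0)⁻¹ (inv_ne_zero hw)
  have ha : ∀ f, a f = (v 0)⁻¹ * e f * v 0 := fun f => by
    show (v 0)⁻¹ * e f * (v 0)⁻¹⁻¹ = _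
    rw [inv_inv]
  let b : A.G →+* G' := (e.comp A.i).codRestrict G' (fun g => (hG' _).2 fun π => hτe π _)
  have hb : ∀ g, (b g : Q) = e (A.i g) := fun _ => rfl
  have hcomm : ∀ g j, v j * e (A.i g) = e (A.i g) * v j := by
    intro g j
    have := congrArg θ (rV_comm lb j g)
    simp only [map_mul] at this
    exact this
  let B : St m :=
    { F := Q, G := G', i := G'.subtype, x := fun k => a (A.x k), x0 := by rw [A.x0, map_one]
      li := by
        intro g hg
        have h1 : ∑ k, (g k : Q) * ((v 0)⁻¹ * e (A.x k)) = 0 := by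
          have h2 : (∑ k, (g k : Q) * ((v 0)⁻¹ * e (A.x k))) * v 0 = 0 := by
            rw [Finset.sum_mul, ← hg]
            refine Finset.sum_congr rfl fun k _ => ?_
            show _ = (g k : Q) * a (A.x k)
            rw [ha]; simp only [mul_assoc]
          exact (mul_eq_zero.1 h2).resolve_right hw
        have h3 : ∀ j, ∑ k, (g k : Q) * (z j)⁻¹ * e (A.x k) = 0 := by
          intro j
          have := congrArg (τ j) h1
          simp only [map_sum, map_mul, map_zero, hτe, hτ0, map_inv₀] at this
          rw [← this]
          refine Finset.sum_congr rfl fun k _ => ?_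
          rw [(hG' _).1 (g k).2, mul_assoc]
        let K : Fin (m + 2) × Fin (m + 2) → Q := fun r => (g r.1 : Q) * (z r.2)⁻¹
        have hcc0 : L.cc (0 : Fin (m + 2)) = 0 := if_pos rfl
        have hzz : z 0 = v 0 := by rw [hz, hcc0]; simp
        have hK : K ᵥ* ((Nmat A L lb).map θ) = 0 := by
          funext c
          obtain ⟨i, j⟩ := c
          have hent : ∀ r, (Nmat A L lb).map θ r (i, j) =
              E' (NA A L r (i, j)) + E' (NB r (i, j)) * v 0 + E' (NC A L r (i, j)) * v 1 := by
            intro r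
            rw [Matrix.map_apply]
            show θ (aff A L lb _ _ _) = _
            unfold aff
            simp only [map_add, map_mul, hE', hv]
          simp only [Matrix.vecMul, dotProduct, hent, mul_add, Finset.sum_add_distrib]
          have hA : ∑ r, K r * E' (NA A L r (i, j)) = 0 := by
            by_cases hj : j = 0
            · subst hj
              rw [Fintype.sum_prod_type, ← h3 i]
              refine Finset.sum_congr rfl fun k _ => ?_
              refine (Finset.sum_eq_single i ?_ ?_).trans ?_
              · intro b _ hb
                simp [NA, hb]
              · intro h; exact absurd (Finset.mem_univ _) h
              · simp [NA, K, he]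
            · refine Finset.sum_eq_zero fun r _ => ?_
              simp [NA, hj]
          have hB : ∑ r, K r * (E' (NB r (i, j)) * v 0) = K (i, j) * v 0 - K (i, 0) * v 0 := by
            rw [Fintype.sum_prod_type]
            refine (Finset.sum_eq_single i ?_ ?_).trans ?_
            · intro b _ hb
              refine Finset.sum_eq_zero fun r _ => ?_
              simp [NB, hb]
            · intro h; exact absurd (Finset.mem_univ _) h
            · have : ∀ r, K (i, r) * (E' (NB (i, r) (i, j)) * v 0) =
                  (if r = j then K (i, r) * v 0 else 0) - (if r = 0 then K (i, r) * v 0 else 0) := by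
                intro r
                simp only [NB, if_true, map_sub, sub_mul, mul_sub]
                congr 1
                · split_ifs <;> simp
                · split_ifs <;> simp
              rw [Finset.sum_congr rfl fun r _ => this r, Finset.sum_sub_distrib]
              congr 1
              · refine (Finset.sum_eq_single j ?_ ?_).trans (if_pos rfl)
                · intro b _ hb; exact if_neg hb
                · intro h; exact absurd (Finset.mem_univ _) h
              · refine (Finset.sum_eq_single 0 ?_ ?_).trans (if_pos rfl)
                · intro b _ hb; exact if_neg hb
                · intro h; exact absurd (Finset.mem_univ _) h
          have hC : ∑ r, K r * (E' (NC A L r (i, j)) * v 1) = K (i, j) * (E' (L.cc j) * v 1) := by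
            refine (Finset.sum_eq_single (i, j) ?_ ?_).trans ?_
            · intro b _ hb
              simp [NC, hb]
            · intro h; exact absurd (Finset.mem_univ _) h
            · simp [NC]
          rw [hA, hB, hC, zero_add]
          have e1 : K (i, j) * v 0 - K (i, 0) * v 0 + K (i, j) * (E' (L.cc j) * v 1) =
            K (i, j) * z j - K (i, 0) * z 0 := by
            rw [hzz, hz, mul_add]; abel
          rw [e1]
          simp only [K]
          rw [mul_assoc, mul_assoc, inv_mul_cancel₀ (hz0 _), inv_mul_cancel₀ (hz0 _), sub_self]
          rfl
        have hK0 : K = 0 := by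
          have := congrArg (fun v => v ᵥ* M) hK
          simpa only [Matrix.vecMul_vecMul, hM1, Matrix.vecMul_one, Matrix.zero_vecMul] using this
        funext k
        have := congrFun hK0 (k, 0)
        exact Subtype.ext ((mul_eq_zero.1 this).resolve_right (inv_ne_zero (hz0 _))) }
  let h : Hm A B :=
    { a := a, b := b
      comm := fun g => by
        show a (A.i g) = (b g : Q)
        rw [ha, mul_assoc, ← hcomm, hb, inv_mul_cancel_left₀ hw]
      ax := fun k => rfl }
  refine ⟨B, h, ?_⟩
  intro f
  let y : Fin 2 → Q := D *ᵥ (fun a => e f * v a)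
  have hy : ∀ a, v a * y 0 + e (A.x 1) * v a * y 1 = e f * v a := by
    intro a
    rw [← hSmul]
    simp only [y, Matrix.mulVec_mulVec, hD1, Matrix.one_mulVec]
  have hfix : ∀ k, y k ∈ G' := by
    intro k
    rw [hG']
    intro j
    have : (fun k => τ j (y k)) = y := by
      apply huniq
      have h0 := congrArg (τ j) (hy 0)
      have h1 := congrArg (τ j) (hy 1)
      simp only [map_add, map_mul, hτe, hτ0, hτ1] at h0 h1
      have hcc : ∀ f', E' (L.cc j) * e f' = e f' * E' (L.cc j) := by
        intro f'
        rw [he, ← map_mul, L.cc_comm, map_mul]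
      intro a
      rw [hy]
      fin_cases a
      · show v 0 * τ j (y 0) + e (A.x 1) * v 0 * τ j (y 1) = e f * v 0
        have h2 := congrArg (fun q => E' (L.cc j) * q) h1
        simp only [mul_add, ← mul_assoc, hcc] at h2
        rw [hz] at h0
        simp only [mul_add, add_mul, ← mul_assoc] at h0
        have h3 := congrArg₂ (· - ·) h0 h2
        simp only [add_sub_cancel_right] at h3
        rw [← h3]; abel
      · exact h1
    exact congrFun this k
  refine ⟨⟨y 0, hfix 0⟩, ⟨y 1, hfix 1⟩, ?_⟩
  show a f = y 0 + a (A.x 1) * y 1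
  rw [ha, ha, mul_assoc, ← hy 0, mul_add, inv_mul_cancel_left₀ hw]
  simp only [mul_assoc]

end FT


namespace FT
open Matrix

theorem exists_colim (K : ℕ → Type) [∀ n, DivisionRing (K n)] (s : ∀ n, K n →+* K (n + 1)) :
    ∃ (L : Type) (_ : DivisionRing L) (o : ∀ n, K n →+* L),
      (∀ n x, o (n + 1) (s n x) = o n x) ∧ (∀ y, ∃ n x, o n x = y) ∧
      (∀ (P : Type) [Ring P] (g : ∀ n, K n →+* P), (∀ n x, g (n + 1) (s n x) = g n x) →
        ∃ g' : L →+* P, ∀ n x, g' (o n x) = g n x) := by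
  let t : ∀ i j, i ≤ j → (K i →+* K j) := fun i j h =>
    Nat.leRec (motive := fun j _ => K i →+* K j) (RingHom.id _) (fun _ _ f => (s _).comp f) h
  have t0 : ∀ i, t i i le_rfl = RingHom.id _ := fun i => Nat.leRec_self _ _
  have t1 : ∀ i j (h : i ≤ j), t i (j + 1) (h.trans (Nat.le_succ _)) = (s j).comp (t i j h) := fun i j h =>
    Nat.leRec_succ _ _ _
  have tt : ∀ i j k (h : i ≤ j) (h' : j ≤ k) x, t j k h' (t i j h x) = t i k (h.trans h') x := by
    intro i j k h h'
    induction k, h' using Nat.le_induction with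
    | base => intro x; rw [t0]; rfl
    | succ k h' ih =>
      intro x
      rw [t1 j k h', t1 i k (h.trans h')]
      exact congrArg (s k) (ih x)
  have : DirectedSystem K (fun i j h => t i j h) :=
    ⟨fun i x => by rw [t0]; rfl, fun i j k h h' x => tt _ _ _ _ _ _⟩
  refine ⟨DirectLimit K t, inferInstance, fun n => DirectLimit.Ring.of K t n, ?_, ?_, ?_⟩
  · intro n x
    have e : s n x = t n (n + 1) (Nat.le_succ _) x := by
      rw [t1 n n le_rfl, t0]; rfl
    rw [e]
    exact DirectLimit.Ring.of_f _ _
  · intro y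
    induction y using DirectLimit.induction with
    | _ i x => exact ⟨i, x, rfl⟩
  · intro P _ g hg
    have hg' : ∀ i j h x, g j (t i j h x) = g i x := by
      intro i j h
      induction j, h using Nat.le_induction with
      | base => intro x; rw [t0]; rfl
      | succ k h ih =>
        intro x
        rw [t1 i k h, RingHom.comp_apply, hg, ih]
    exact ⟨DirectLimit.Ring.lift K t P g hg', fun n x => rfl⟩

theorem step12 {m : ℕ} (A : St m) : ∃ (B : St m) (h : Hm A B),
    (∀ f, ∃ γ : Fin (m + 2) → B.G, h.a f = ∑ k, B.i (γ k) * B.x k) ∧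
    ∀ f, ∃ s t : B.G, h.a f = B.i s + B.x 1 * B.i t := by
  obtain ⟨B, h, hB⟩ := step1 A
  obtain ⟨C, k, hC⟩ := step2 B
  refine ⟨C, ⟨k.a.comp h.a, k.b.comp h.b, fun g => ?_, fun j => ?_⟩, fun f => ?_, fun f => ?_⟩
  · simp only [RingHom.comp_apply, h.comm, k.comm]
  · simp only [RingHom.comp_apply, h.ax, k.ax]
  · obtain ⟨γ, hγ⟩ := hB f
    refine ⟨fun j => k.b (γ j), ?_⟩
    rw [RingHom.comp_apply, hγ, map_sum]
    simp only [map_mul, k.comm, k.ax]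
  · exact hC _

theorem limit_aux {m : ℕ} (S : ℕ → St m) (h : ∀ n, Hm (S n) (S (n + 1)))
    (h1 : ∀ n (f : (S n).F), ∃ γ : Fin (m + 2) → (S (n + 1)).G,
      (h n).a f = ∑ k, (S (n + 1)).i (γ k) * (S (n + 1)).x k)
    (h2 : ∀ n (f : (S n).F), ∃ s t : (S (n + 1)).G,
      (h n).a f = (S (n + 1)).i s + (S (n + 1)).x 1 * (S (n + 1)).i t) :
    ∃ (B : St m) (_ : Hm (S 0) B),
    (∀ f : B.F, ∃ γ : Fin (m + 2) → B.G, f = ∑ k, B.i (γ k) * B.x k) ∧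
    ∀ f : B.F, ∃ s t : B.G, f = B.i s + B.x 1 * B.i t := by
  obtain ⟨LF, dF, oF, oF1, oF2, -⟩ := exists_colim (fun n => (S n).F) (fun n => (h n).a)
  obtain ⟨LG, dG, oG, oG1, oG2, oG3⟩ := exists_colim (fun n => (S n).G) (fun n => (h n).b)
  obtain ⟨I, hI⟩ := oG3 LF (fun n => (oF n).comp (S n).i) (fun n x => by
    simp only [RingHom.comp_apply]
    rw [← (h n).comm, oF1])
  have hI' : ∀ n x, I (oG n x) = oF n ((S n).i x) := hI
  have hx : ∀ n k, oF n ((S n).x k) = oF 0 ((S 0).x k) := by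
    intro n k
    induction n with
    | zero => rfl
    | succ n ih => rw [← (h n).ax, oF1, ih]
  have hup : ∀ y : LG, ∃ n, ∀ p, n ≤ p → ∃ x, oG p x = y := by
    intro y
    obtain ⟨n, x, hx⟩ := oG2 y
    refine ⟨n, fun p hp => ?_⟩
    induction p, hp using Nat.le_induction with
    | base => exact ⟨x, hx⟩
    | succ p _ ih =>
      obtain ⟨x', hx'⟩ := ih
      exact ⟨(h p).b x', by rw [oG1, hx']⟩
  let B : St m :=
    { F := LF, G := LG, i := I, x := fun k => oF 0 ((S 0).x k), x0 := by rw [(S 0).x0, map_one]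
      li := by
        intro g hg
        choose n hn using fun k => hup (g k)
        choose y hy using fun k => hn k (Finset.univ.sup n) (Finset.le_sup (Finset.mem_univ k))
        have h3 : oF (Finset.univ.sup n) (∑ k, (S (Finset.univ.sup n)).i (y k) * (S (Finset.univ.sup n)).x k) = 0 := by
          rw [map_sum, ← hg]
          refine Finset.sum_congr rfl fun k _ => ?_
          rw [map_mul, ← hI', hy, hx]
        have h4 := (S (Finset.univ.sup n)).li y ((map_eq_zero _).1 h3)
        funext k
        rw [← hy k, h4]
        simp }
  refine ⟨B, ⟨oF 0, oG 0, fun g => (hI' 0 g).symm, fun k => rfl⟩, fun f => ?_, fun f => ?_⟩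
  · obtain ⟨n, y, rfl⟩ := oF2 f
    obtain ⟨γ, hγ⟩ := h1 n y
    refine ⟨fun k => oG (n + 1) (γ k), ?_⟩
    show oF n y = ∑ k, I (oG (n + 1) (γ k)) * oF 0 ((S 0).x k)
    rw [← oF1, hγ, map_sum]
    refine Finset.sum_congr rfl fun k _ => ?_
    rw [map_mul, hI', hx]
  · obtain ⟨n, y, rfl⟩ := oF2 f
    obtain ⟨s, t, hγ⟩ := h2 n y
    refine ⟨oG (n + 1) s, oG (n + 1) t, ?_⟩
    show oF n y = I (oG (n + 1) s) + oF 0 ((S 0).x 1) * I (oG (n + 1) t)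
    rw [← oF1, hγ, map_add, map_mul, hI', hx, hI']

theorem limit {m : ℕ} (A : St m) : ∃ (B : St m) (_ : Hm A B),
    (∀ f : B.F, ∃ γ : Fin (m + 2) → B.G, f = ∑ k, B.i (γ k) * B.x k) ∧
    ∀ f : B.F, ∃ s t : B.G, f = B.i s + B.x 1 * B.i t := by
  choose N H H1 H2 using fun A : St m => step12 A
  exact limit_aux (fun n => Nat.rec A (fun _ B => N B) n) (fun n => H _) (fun n => H1 _) (fun n => H2 _)

theorem exists_phi {m : ℕ} (B : St m)
    (hs : ∀ f : B.F, ∃ γ : Fin (m + 2) → B.G, f = ∑ k, B.i (γ k) * B.x k) :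
    ∃ φ : B.F →+* Matrix (Fin (m + 2)) (Fin (m + 2)) B.G,
      ∀ f r (γ : Fin (m + 2) → B.G), B.x r * f = ∑ k, B.i (γ k) * B.x k → φ f r = γ := by
  choose c hc using hs
  have uniq : ∀ f (γ : Fin (m + 2) → B.G), f = ∑ k, B.i (γ k) * B.x k → c f = γ := by
    intro f γ h
    have := B.li (c f - γ) (by
      simp only [Pi.sub_apply, map_sub, sub_mul, Finset.sum_sub_distrib]
      rw [← hc, ← h, sub_self])
    exact sub_eq_zero.1 this
  have hadd : ∀ f f', c (f + f') = c f + c f' := by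
    intro f f'
    apply uniq
    simp only [Pi.add_apply, map_add, add_mul, Finset.sum_add_distrib]
    rw [← hc, ← hc]
  have hone : ∀ r, c (B.x r) = (1 : Matrix (Fin (m + 2)) (Fin (m + 2)) B.G) r := by
    intro r
    apply uniq
    rw [Finset.sum_eq_single r]
    · simp
    · intro b _ hb
      rw [Matrix.one_apply_ne hb.symm]; simp
    · intro h; exact absurd (Finset.mem_univ _) h
  have hzero : c 0 = 0 := by
    apply uniq; simp
  refine ⟨{ toFun := fun f => Matrix.of fun r k => c (B.x r * f) k
            map_one' := ?_, map_zero' := ?_, map_add' := ?_, map_mul' := ?_ }, ?_⟩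
  · refine Matrix.ext fun r k => ?_
    rw [Matrix.of_apply, mul_one, hone]
  · intro f f'
    refine Matrix.ext fun r k => ?_
    rw [Matrix.of_apply, Matrix.mul_apply]
    simp only [Matrix.of_apply]
    have := uniq (B.x r * (f * f')) (fun l => ∑ j, c (B.x r * f) j * c (B.x j * f') l) (by
      conv_lhs => rw [← mul_assoc, hc (B.x r * f), Finset.sum_mul]
      simp only [map_sum, map_mul, Finset.sum_mul]
      rw [Finset.sum_comm]
      refine Finset.sum_congr rfl fun j _ => ?_
      conv_lhs => rw [mul_assoc, hc (B.x j * f'), Finset.mul_sum]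
      simp only [mul_assoc])
    exact congrFun this k
  · refine Matrix.ext fun r k => ?_
    rw [Matrix.of_apply, mul_zero, hzero]; rfl
  · intro f f'
    refine Matrix.ext fun r k => ?_
    rw [Matrix.add_apply, Matrix.of_apply, Matrix.of_apply, Matrix.of_apply, mul_add, hadd]; rfl
  · intro f r γ h
    exact uniq _ _ h

theorem init {m : ℕ} {F G : Type} [DivisionRing F] [DivisionRing G]
    (φ : F →+* Matrix (Fin (m + 2)) (Fin (m + 2)) G)
    (h1 : ∀ g : Fin (m + 2) → G, ∃ f, φ f 0 = g) :
    ∃ (i : G →+* F) (x : Fin (m + 2) → F), x 0 = 1 ∧ LI i x ∧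
      ∀ f r, x r * f = ∑ k, i (φ f r k) * x k := by
  have hinj : ∀ f, φ f 0 = 0 → f = 0 := by
    intro f h
    by_contra hf
    have := congrFun (congrFun (map_mul φ f f⁻¹) 0) 0
    rw [mul_inv_cancel₀ hf, map_one, Matrix.mul_apply, h] at this
    simp at this
  have hinj' : ∀ f f', φ f 0 = φ f' 0 → f = f' := by
    intro f f' h
    apply sub_eq_zero.1
    apply hinj
    rw [map_sub]
    show φ f 0 - φ f' 0 = 0
    rw [h, sub_self]
  choose c hc using h1
  have hmul : ∀ g f, φ (c (Pi.single 0 g) * f) 0 = fun k => g * φ f 0 k := by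
    intro g f
    funext k
    rw [map_mul, Matrix.mul_apply, hc]
    rw [Finset.sum_eq_single 0]
    · simp
    · intro b _ hb; simp [hb]
    · intro h; exact absurd (Finset.mem_univ _) h
  let i : G →+* F :=
    { toFun := fun g => c (Pi.single 0 g)
      map_one' := by
        apply hinj'
        rw [hc, map_one]
        funext k
        rw [Matrix.one_apply, Pi.single_apply]
        simp only [eq_comm]
      map_zero' := by
        apply hinj'
        rw [hc, map_zero]; simp; rfl
      map_add' := by
        intro g g'
        apply hinj'
        rw [hc, map_add]
        show _ = φ _ 0 + φ _ 0
        rw [hc, hc, Pi.single_add]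
      map_mul' := by
        intro g g'
        apply hinj'
        rw [hc, hmul, hc]
        funext k
        rw [Pi.single_apply, Pi.single_apply]
        split_ifs <;> simp }
  have hi : ∀ g, i g = c (Pi.single 0 g) := fun _ => rfl
  let x : Fin (m + 2) → F := fun k => c (Pi.single k 1)
  have hx : ∀ k, x k = c (Pi.single k 1) := fun _ => rfl
  have hsum : ∀ g : Fin (m + 2) → G, φ (∑ k, i (g k) * x k) 0 = g := by
    intro g
    funext l
    rw [map_sum, Matrix.sum_apply]
    simp only [hi, hmul, hx, hc]
    rw [Finset.sum_eq_single l]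
    · simp
    · intro b _ hb; simp [Pi.single_apply, hb.symm]
    · intro h; exact absurd (Finset.mem_univ _) h
  refine ⟨i, x, ?_, ?_, ?_⟩
  · rw [hx, ← hi, map_one]
  · intro g hg
    rw [← hsum g, hg, map_zero]; rfl
  · intro f r
    apply hinj'
    rw [hsum]
    funext k
    rw [map_mul, Matrix.mul_apply, hx, hc]
    rw [Finset.sum_eq_single r]
    · simp
    · intro b _ hb; simp [hb]
    · intro h; exact absurd (Finset.mem_univ _) h

end FT

/-- Every `1`-tight embedding of division rings `F → Mₙ(G)` (`n ≥ 2`) extends to an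
embedding `F′ → Mₙ(G′)` which is both `1`-tight and `2`-tight. -/
theorem stmt6 (n : ℕ) (hn : 2 ≤ n) (F G : Type) [DivisionRing F] [DivisionRing G]
    (φ : F →+* Matrix (Fin n) (Fin n) G) (hinj : Function.Injective φ)
    (h1 : ATight (⇑φ) 1) :
    ∃ E : EmbExtension n F G φ, ATight (⇑E.φ') 1 ∧ ATight (⇑E.φ') 2 := by
  obtain ⟨m, rfl⟩ : ∃ m, n = m + 2 := ⟨n - 2, by omega⟩
  obtain ⟨i, x, x0, li, hx⟩ := FT.init φ (fun g => by
    obtain ⟨f, hf⟩ := h1 (Matrix.of fun _ k => g k)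
    exact ⟨f, funext fun k => hf 0 k (by simp) (by simp)⟩)
  let A : FT.St m := { F := F, G := G, i := i, x := x, x0 := x0, li := li }
  obtain ⟨B, h, hs, ht⟩ := FT.limit A
  obtain ⟨φ', hφ'⟩ := FT.exists_phi B hs
  refine ⟨{ F' := B.F, G' := B.G, ιF := h.a, ιG := h.b, injF := h.a.injective, injG := h.b.injective
            φ' := φ', injφ' := φ'.injective, compat := ?_ }, ?_, ?_⟩
  · intro f
    refine Matrix.ext fun r k => ?_
    rw [hφ' (h.a f) r (fun k => h.b (φ f r k))]
    · rfl
    · rw [← h.ax, ← map_mul]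
      show h.a (x r * f) = _
      rw [hx, map_sum]
      refine Finset.sum_congr rfl fun k _ => ?_
      rw [map_mul, ← h.comm, ← h.ax]
  · intro g
    refine ⟨∑ k, B.i (g 0 k) * B.x k, fun r k hr _ => ?_⟩
    have : r = 0 := Fin.ext (by simpa using hr)
    subst this
    show φ' _ 0 k = _
    rw [hφ' _ 0 (g 0)]
    rw [B.x0, one_mul]
  · intro g
    let u : B.F := ∑ k : Fin (m + 1), B.i (g 0 k.succ) * B.x k.succ
    let v : B.F := ∑ k : Fin (m + 1), B.i (g 1 k.succ) * B.x k.succ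
    obtain ⟨s, t, hst⟩ := ht (v - B.x 1 * u)
    refine ⟨u + B.i t, fun r k hr hk => ?_⟩
    obtain ⟨k, rfl⟩ : ∃ k', k = Fin.succ k' := Fin.exists_succ_eq.2 (by
      rintro rfl; simp at hk) |>.imp fun _ h => h.symm
    have hr' : r = 0 ∨ r = 1 := by
      rcases r with ⟨r, hr2⟩
      have : r = 0 ∨ r = 1 := by simp at hr; omega
      rcases this with rfl | rfl
      · left; rfl
      · right; rfl
    show φ' _ r k.succ = _
    rcases hr' with rfl | rfl
    · rw [hφ' _ 0 (Fin.cons t fun k => g 0 k.succ)]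
      · simp
      · rw [B.x0, one_mul, Fin.sum_univ_succ]
        simp only [Fin.cons_zero, Fin.cons_succ, B.x0, mul_one]
        rw [add_comm]
    · rw [hφ' _ 1 (Fin.cons (-s) fun k => g 1 k.succ)]
      · simp
      · rw [Fin.sum_univ_succ]
        simp only [Fin.cons_zero, Fin.cons_succ, B.x0, mul_one]
        show _ = _ + v
        rw [mul_add, map_neg, ← sub_eq_zero]
        rw [← sub_eq_zero] at hst
        rw [← neg_eq_zero, ← hst]
        abel
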